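/- For x ∈ B_n one has the chain of inclusions RSSS(x) ⊆ USS(x) ⊆ SSS(x) ⊆ SS(x), and if x is cyclically weighted then RSSS(x) = USS(x). -/

import Mathlib

/-! Basic definitions for the braid group `B_n`, its Garside structure,
and related notions, following Garside/El-Rifai–Morton.
Generators are indexed by `i : Fin (n-1)`, with `σ i` corresponding to the
Artin generator `σ_{i+1}` (1-based) of the paper. -/

/-- The braid relations, as a set of elements of the free group. -/
def braidRels (n : ℕ) : Set (FreeGroup (Fin (n - 1))) :=
  { r | (∃ i j : Fin (n - 1), (i : ℕ) + 1 < (j : ℕ) ∧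
          r = .of i * .of j * (.of i)⁻¹ * (.of j)⁻¹) ∨
        (∃ i j : Fin (n - 1), (i : ℕ) + 1 = (j : ℕ) ∧
          r = (.of i * .of j * .of i) * (.of j * .of i * .of j)⁻¹) }

/-- The braid group on `n` strands. -/
abbrev BraidGroup (n : ℕ) := PresentedGroup (braidRels n)

namespace BraidGroup

variable {n : ℕ}

/-- The Artin generator `σ_{i+1}` (`i` is a 0-based index). -/
def σ (i : Fin (n - 1)) : BraidGroup n := PresentedGroup.of i

/-- `σ'` with a natural-number 0-based index (junk value `1` out of range). -/
def σ' (n : ℕ) (i : ℕ) : BraidGroup n := if h : i < n - 1 then σ ⟨i, h⟩ else 1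

/-- The fundamental braid `Δ = (σ_1⋯σ_{n-1})(σ_1⋯σ_{n-2})⋯(σ_1σ_2)σ_1`. -/
def Δ (n : ℕ) : BraidGroup n :=
  (((List.range (n - 1)).reverse).map
    (fun j => ((List.range (j + 1)).map (σ' n)).prod)).prod

/-- The monoid of positive braids inside `B_n` (the image of `B_n^+`). -/
def positives (n : ℕ) : Submonoid (BraidGroup n) :=
  Submonoid.closure (Set.range (σ (n := n)))

/-- `x` is a positive braid. -/
def IsPositive (x : BraidGroup n) : Prop := x ∈ positives n

/-- The prefix (left-divisibility) order: `x ≼ y` iff `x⁻¹y` is positive. -/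
def LeftDvd (x y : BraidGroup n) : Prop := ∃ p, IsPositive p ∧ x * p = y

/-- The right-divisibility order: `x ≼_R y` iff `y x⁻¹` is positive. -/
def RightDvd (x y : BraidGroup n) : Prop := ∃ p, IsPositive p ∧ p * x = y

/-- Permutation braids: positive left divisors of `Δ`. -/
def IsPermBraid (x : BraidGroup n) : Prop := IsPositive x ∧ LeftDvd x (Δ n)

/-- The involution `τ` of `B_n`, determined by `τ(σ_i) = σ_{n-i}`
(on 0-based indices: `i ↦ (n-2) - i`, i.e. `Fin.rev`). -/
noncomputable def τ (n : ℕ) : BraidGroup n →* BraidGroup n :=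
  Classical.epsilon (fun f => ∀ i : Fin (n - 1), f (σ i) = σ i.rev)

/-- `τ^u` for an integer `u`: equals `τ` for odd `u` and the identity for even `u`
(`τ` is an involution). -/
noncomputable def τpow (u : ℤ) (x : BraidGroup n) : BraidGroup n :=
  if Even u then x else τ n x

/-- The product `a⬝b` of a permutation braid `a` and a positive braid `b` is left
weighted iff `a* ∧ b = e`, i.e. no generator left-divides both `a* = a⁻¹Δ` and `b`. -/
def IsLeftWeighted (a b : BraidGroup n) : Prop :=
  ∀ i : Fin (n - 1), ¬ (LeftDvd (σ i) (a⁻¹ * Δ n) ∧ LeftDvd (σ i) b)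

/-- `Δ^u x_1 ⋯ x_k` is the left weighted form of `x`, where `L = [x_1, …, x_k]`. -/
def IsWeightedForm (u : ℤ) (L : List (BraidGroup n)) (x : BraidGroup n) : Prop :=
  (∀ a ∈ L, IsPermBraid a ∧ a ≠ 1 ∧ a ≠ Δ n) ∧
  L.Chain' IsLeftWeighted ∧
  x = (Δ n) ^ u * L.prod

/-- The left weighted form of a braid (chosen by choice; it exists and is unique). -/
noncomputable def wf (x : BraidGroup n) : ℤ × List (BraidGroup n) :=
  Classical.epsilon (fun p => IsWeightedForm p.1 p.2 x)

/-- The infimum `inf(x)`. -/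
noncomputable def binf (x : BraidGroup n) : ℤ := (wf x).1

/-- The canonical length `ℓ(x)`. -/
noncomputable def blen (x : BraidGroup n) : ℕ := (wf x).2.length

/-- The supremum `sup(x) = inf(x) + ℓ(x)`. -/
noncomputable def bsup (x : BraidGroup n) : ℤ := binf x + blen x

/-- The head `H(x)`: the first factor of the weighted form. -/
noncomputable def bhead (x : BraidGroup n) : BraidGroup n := ((wf x).2.head?).getD 1

/-- The tail `T(x)`: the last factor of the weighted form. -/
noncomputable def btail (x : BraidGroup n) : BraidGroup n := ((wf x).2.getLast?).getD 1

/-- Cycling: `c(x) = τ^u(H(x))⁻¹ · x · τ^u(H(x))`. -/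
noncomputable def cyc (x : BraidGroup n) : BraidGroup n :=
  (τpow (binf x) (bhead x))⁻¹ * x * τpow (binf x) (bhead x)

/-- Decycling: `d(x) = T(x) · x · T(x)⁻¹`. -/
noncomputable def decyc (x : BraidGroup n) : BraidGroup n :=
  btail x * x * (btail x)⁻¹

/-- `x` is cyclically weighted: `x_k ⬝ τ^u(x_1)` is left weighted. -/
noncomputable def IsCW (x : BraidGroup n) : Prop :=
  IsLeftWeighted (btail x) (τpow (binf x) (bhead x))

/-- `x` is weakly cyclically weighted: `H(x·τ^u(H(x))) = H(x)`. -/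
noncomputable def IsWCW (x : BraidGroup n) : Prop :=
  bhead (x * τpow (binf x) (bhead x)) = bhead x

/-- The summit set of `x`: conjugates with maximal infimum. -/
def SS (x : BraidGroup n) : Set (BraidGroup n) :=
  { y | IsConj x y ∧ ∀ z, IsConj x z → binf z ≤ binf y }

/-- The super summit set of `x`: conjugates with maximal infimum and minimal supremum. -/
def SSS (x : BraidGroup n) : Set (BraidGroup n) :=
  { y | y ∈ SS x ∧ ∀ z, IsConj x z → bsup y ≤ bsup z }

/-- The ultra summit set of `x`. -/
def USS (x : BraidGroup n) : Set (BraidGroup n) :=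
  { y ∈ SSS x | ∃ M : ℕ, 0 < M ∧ cyc^[M] y = y }

/-- The reduced super summit set of `x`. -/
def RSSS (x : BraidGroup n) : Set (BraidGroup n) :=
  { y | IsConj x y ∧ (∃ M : ℕ, 0 < M ∧ cyc^[M] y = y) ∧
        (∃ N : ℕ, 0 < N ∧ decyc^[N] y = y) }

/-- The left meet (greatest common left divisor) of two braids. -/
noncomputable def leftMeet (a b : BraidGroup n) : BraidGroup n :=
  Classical.epsilon (fun m => IsPositive m ∧ LeftDvd m a ∧ LeftDvd m b ∧
    ∀ c, IsPositive c → LeftDvd c a → LeftDvd c b → LeftDvd c m)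

/-- `x` is periodic: some positive power of `x` is a power of `Δ²`. -/
def IsPeriodic (x : BraidGroup n) : Prop :=
  ∃ m : ℕ, 0 < m ∧ ∃ k : ℤ, x ^ m = (Δ n) ^ (2 * k)

/-- The free generator `x_{i+1}` of `π₁` of the `n`-punctured disk (0-based index;
junk value `1` out of range). -/
def freeGen (n : ℕ) (i : ℕ) : FreeGroup (Fin n) := if h : i < n then .of ⟨i, h⟩ else 1

/-- The Artin action of `B_n` on the free group `F_n`:
`σ_i` sends `x_i ↦ x_i x_{i+1} x_i⁻¹`, `x_{i+1} ↦ x_i`, fixing the other generators. -/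
noncomputable def artin (n : ℕ) : BraidGroup n →* Monoid.End (FreeGroup (Fin n)) :=
  Classical.epsilon (fun f => ∀ i : Fin (n - 1),
    f (σ i) = FreeGroup.lift (fun j : Fin n =>
      if (j : ℕ) = (i : ℕ) then freeGen n i * freeGen n (i + 1) * (freeGen n i)⁻¹
      else if (j : ℕ) = (i : ℕ) + 1 then freeGen n i
      else FreeGroup.of j))

/-- The element of `π₁` represented by the round curve enclosing punctures
`I.1 + 1, …, I.2` (1-based): the product `x_{I.1+1} ⋯ x_{I.2}`. -/
def curveWord (n : ℕ) (I : ℕ × ℕ) : FreeGroup (Fin n) :=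
  ((List.range (I.2 - I.1)).map (fun t => freeGen n (I.1 + t))).prod

/-- An essential round curve: it encloses at least `2` and at most `n-1` punctures. -/
def EssentialCurve (n : ℕ) (I : ℕ × ℕ) : Prop :=
  I.1 + 2 ≤ I.2 ∧ I.2 ≤ n ∧ I.2 - I.1 ≤ n - 1

/-- Two round curves are disjoint (as curves): the intervals are disjoint or nested. -/
def CurvesCompatible (I J : ℕ × ℕ) : Prop :=
  I.2 ≤ J.1 ∨ J.2 ≤ I.1 ∨ (I.1 ≤ J.1 ∧ J.2 ≤ I.2) ∨ (J.1 ≤ I.1 ∧ I.2 ≤ J.2)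

/-- `x` is reducible: some conjugate of `x` preserves, up to conjugacy in `π₁`
(i.e. up to isotopy) and orientation, a nonempty system of disjoint essential
round curves. -/
noncomputable def IsReducible (x : BraidGroup n) : Prop :=
  ∃ y, IsConj x y ∧ ∃ F : Finset (ℕ × ℕ), F.Nonempty ∧
    (∀ I ∈ F, EssentialCurve n I) ∧
    (∀ I ∈ F, ∀ J ∈ F, I ≠ J → CurvesCompatible I J) ∧
    (∀ I ∈ F, ∃ J ∈ F, ∃ g : FreeGroup (Fin n),
      artin n y (curveWord n I) = g * curveWord n J * g⁻¹ ∨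
      artin n y (curveWord n I) = g * (curveWord n J)⁻¹ * g⁻¹)

/-- `x` is pseudo-Anosov: neither periodic nor reducible (Nielsen–Thurston). -/
noncomputable def IsPseudoAnosov (x : BraidGroup n) : Prop :=
  ¬ IsPeriodic x ∧ ¬ IsReducible x

/-- `σ_i` (1-based index `i`) left-divides the positive braid `w`, i.e. `i` is
 a descent of `w`. -/
def HasDescent (n : ℕ) (i : ℕ) (w : BraidGroup n) : Prop := LeftDvd (σ' n (i - 1)) w

/-- `D(n,k,i)`: the probability that a product of `k` independent uniformly random
permutation braids begins with the descent `i` (1-based), computed by counting. -/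
noncomputable def descentProb (n k : ℕ) (i : ℕ) : ℝ :=
  ({ f : Fin k → BraidGroup n | (∀ j, IsPermBraid (f j)) ∧
      HasDescent n i (List.ofFn f).prod }.ncard : ℝ) / (n.factorial ^ k : ℝ)

/-- `D(n,k)`: the expected number of descents of a product of `k` random
permutation braids. -/
noncomputable def descentExp (n k : ℕ) : ℝ :=
  ∑ i ∈ Finset.Icc 1 (n - 1), descentProb n k i

/-- `d(n,k) = D(n,k) - D(n,k-1)`: the expected number of descents contributed by
the `k`-th factor. -/
noncomputable def descentInc (n k : ℕ) : ℝ := descentExp n k - descentExp n (k - 1)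



/-! ### The positive braid monoid, by words -/

/-- Commuting indices. -/
def Far {m : ℕ} (i j : Fin m) : Prop := (i : ℕ) + 1 < j ∨ (j : ℕ) + 1 < i

/-- Neighbouring indices. -/
def Adj {m : ℕ} (i j : Fin m) : Prop := (i : ℕ) + 1 = j ∨ (j : ℕ) + 1 = i

/-- One application of a braid relation to a word. -/
inductive BStep {m : ℕ} : List (Fin m) → List (Fin m) → Prop
  | comm (i j : Fin m) (w : List (Fin m)) (h : Far i j) : BStep (i :: j :: w) (j :: i :: w)
  | braid (i j : Fin m) (w : List (Fin m)) (h : Adj i j) :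
      BStep (i :: j :: i :: w) (j :: i :: j :: w)
  | cons (i : Fin m) {u v : List (Fin m)} (h : BStep u v) : BStep (i :: u) (i :: v)

/-- Equivalence of positive words. -/
def WEq {m : ℕ} : List (Fin m) → List (Fin m) → Prop := Relation.ReflTransGen BStep

theorem Far.symm {m : ℕ} {i j : Fin m} (h : Far i j) : Far j i := Or.symm h
theorem Adj.symm {m : ℕ} {i j : Fin m} (h : Adj i j) : Adj j i := Or.symm h

theorem BStep.symm {m : ℕ} {u v : List (Fin m)} (h : BStep u v) : BStep v u := by
  induction h with
  | comm i j w h => exact .comm j i w h.symm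
  | braid i j w h => exact .braid j i w h.symm
  | cons i _ ih => exact .cons i ih

theorem BStep.append_right {m : ℕ} {u v : List (Fin m)} (h : BStep u v) (w : List (Fin m)) :
    BStep (u ++ w) (v ++ w) := by
  induction h with
  | comm i j w' h => exact .comm i j _ h
  | braid i j w' h => exact .braid i j _ h
  | cons i _ ih => exact .cons i ih

theorem BStep.append_left {m : ℕ} {u v : List (Fin m)} (h : BStep u v) (w : List (Fin m)) :
    BStep (w ++ u) (w ++ v) := by
  induction w with
  | nil => exact h
  | cons i w ih => exact .cons i ih

theorem BStep.length_eq {m : ℕ} {u v : List (Fin m)} (h : BStep u v) : u.length = v.length := by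
  induction h with
  | comm i j w' h => rfl
  | braid i j w' h => rfl
  | cons i _ ih => simp [ih]

theorem WEq.symm {m : ℕ} {u v : List (Fin m)} (h : WEq u v) : WEq v u := by
  induction h with
  | refl => exact .refl
  | tail _ h ih => exact .head h.symm ih

theorem WEq.append {m : ℕ} {u v u' v' : List (Fin m)} (h : WEq u v) (h' : WEq u' v') :
    WEq (u ++ u') (v ++ v') := by
  have h1 : WEq (u ++ u') (v ++ u') := by
    induction h with
    | refl => exact .refl
    | tail _ h ih => exact .tail ih (h.append_right _)
  refine h1.trans ?_
  clear h1
  induction h' with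
  | refl => exact .refl
  | tail _ h ih => exact .tail ih (h.append_left _)

theorem WEq.length_eq {m : ℕ} {u v : List (Fin m)} (h : WEq u v) : u.length = v.length := by
  induction h with
  | refl => rfl
  | tail _ h ih => exact ih.trans h.length_eq

/-- The congruence on the free monoid. -/
def wCon (m : ℕ) : Con (FreeMonoid (Fin m)) where
  r u v := WEq (FreeMonoid.toList u) (FreeMonoid.toList v)
  iseqv := ⟨fun _ => .refl, fun h => h.symm, fun h h' => h.trans h'⟩
  mul' := fun h h' => by
    simp only [FreeMonoid.toList_mul]
    exact h.append h'

abbrev PMon (m : ℕ) := (wCon m).Quotient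

/-- class of a word -/
def wmk {m : ℕ} (u : List (Fin m)) : PMon m := (wCon m).mk' (FreeMonoid.ofList u)

/-- generators of the monoid -/
def sg {m : ℕ} (i : Fin m) : PMon m := wmk [i]

theorem wmk_eq {m : ℕ} {u v : List (Fin m)} : wmk u = wmk v ↔ WEq u v := by
  unfold wmk
  exact (wCon m).eq

theorem wmk_surj {m : ℕ} (x : PMon m) : ∃ u, wmk u = x := by
  obtain ⟨u, rfl⟩ := (wCon m).mk'_surjective x
  exact ⟨FreeMonoid.toList u, rfl⟩

theorem wmk_nil {m : ℕ} : wmk ([] : List (Fin m)) = 1 := rfl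

theorem wmk_append {m : ℕ} (u v : List (Fin m)) : wmk (u ++ v) = wmk u * wmk v := rfl

theorem wmk_cons {m : ℕ} (i : Fin m) (v : List (Fin m)) : wmk (i :: v) = sg i * wmk v := rfl

theorem sg_comm {m : ℕ} {i j : Fin m} (h : Far i j) (w : PMon m) :
    sg i * (sg j * w) = sg j * (sg i * w) := by
  obtain ⟨w, rfl⟩ := wmk_surj w
  simp only [← wmk_cons]
  exact wmk_eq.2 (.single (.comm i j w h))

theorem sg_braid {m : ℕ} {i j : Fin m} (h : Adj i j) (w : PMon m) :
    sg i * (sg j * (sg i * w)) = sg j * (sg i * (sg j * w)) := by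
  obtain ⟨w, rfl⟩ := wmk_surj w
  simp only [← wmk_cons]
  exact wmk_eq.2 (.single (.braid i j w h))

/-- length on the monoid -/
def plen {m : ℕ} (x : PMon m) : ℕ :=
  Quotient.liftOn x (fun u => (FreeMonoid.toList u).length) (fun _ _ h => WEq.length_eq h)

theorem plen_wmk {m : ℕ} (u : List (Fin m)) : plen (wmk u) = u.length := rfl

theorem plen_mul {m : ℕ} (x y : PMon m) : plen (x * y) = plen x + plen y := by
  obtain ⟨u, rfl⟩ := wmk_surj x
  obtain ⟨v, rfl⟩ := wmk_surj y
  rw [← wmk_append]; simp [plen_wmk]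

theorem plen_sg {m : ℕ} (i : Fin m) : plen (sg i) = 1 := rfl

theorem plen_eq_zero {m : ℕ} {x : PMon m} (h : plen x = 0) : x = 1 := by
  obtain ⟨u, rfl⟩ := wmk_surj x
  rw [plen_wmk] at h
  rw [List.length_eq_zero_iff.1 h, wmk_nil]

theorem pmon_cases {m : ℕ} (x : PMon m) : x = 1 ∨ ∃ i y, x = sg i * y := by
  obtain ⟨u, rfl⟩ := wmk_surj x
  cases u with
  | nil => exact .inl rfl
  | cons i u => exact .inr ⟨i, wmk u, rfl⟩

/-- The conclusion of Garside's lemma. -/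
def GK {m : ℕ} (i j : Fin m) (x y : PMon m) : Prop :=
  (i = j ∧ x = y) ∨ (Far i j ∧ ∃ w, x = sg j * w ∧ y = sg i * w) ∨
  (Adj i j ∧ ∃ w, x = sg j * (sg i * w) ∧ y = sg i * (sg j * w))

theorem GK.symm {m : ℕ} {i j : Fin m} {x y : PMon m} (h : GK i j x y) : GK j i y x := by
  rcases h with ⟨h, h'⟩ | ⟨h, w, h1, h2⟩ | ⟨h, w, h1, h2⟩
  · exact .inl ⟨h.symm, h'.symm⟩
  · exact .inr (.inl ⟨h.symm, w, h2, h1⟩)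
  · exact .inr (.inr ⟨h.symm, w, h2, h1⟩)

theorem GK.self {m : ℕ} {i : Fin m} {x y : PMon m} (h : GK i i x y) : x = y := by
  rcases h with ⟨h, h'⟩ | ⟨h, w, h1, h2⟩ | ⟨h, w, h1, h2⟩
  · exact h'
  · rcases h with h | h <;> omega
  · rcases h with h | h <;> omega

theorem GK.far {m : ℕ} {i j : Fin m} {x y : PMon m} (h : GK i j x y) (hf : Far i j) :
    ∃ w, x = sg j * w ∧ y = sg i * w := by
  rcases h with ⟨h, h'⟩ | ⟨h, w, h1, h2⟩ | ⟨h, w, h1, h2⟩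
  · subst h; rcases hf with h | h <;> omega
  · exact ⟨w, h1, h2⟩
  · rcases h with h | h <;> rcases hf with h' | h' <;> omega

theorem GK.adj {m : ℕ} {i j : Fin m} {x y : PMon m} (h : GK i j x y) (hf : Adj i j) :
    ∃ w, x = sg j * (sg i * w) ∧ y = sg i * (sg j * w) := by
  rcases h with ⟨h, h'⟩ | ⟨h, w, h1, h2⟩ | ⟨h, w, h1, h2⟩
  · subst h; rcases hf with h | h <;> omega
  · rcases h with h | h <;> rcases hf with h' | h' <;> omega
  · exact ⟨w, h1, h2⟩

theorem GK.trans_aux {m : ℕ} {N : ℕ}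
    (IH : ∀ (i j : Fin m) (x y : PMon m), plen x < N → sg i * x = sg j * y → GK i j x y)
    {i j k : Fin m} {x z w w' : PMon m} (hij : Far i j) (hjk : Adj j k)
    (hN : plen (sg i * w) ≤ N)
    (h : sg i * w = sg k * (sg j * w')) (hx : x = sg j * w) (hz : z = sg j * (sg k * w')) :
    GK i k x z := by
  have hl := congrArg plen h
  simp only [plen_mul, plen_sg] at hl hN
  rcases IH i k w (sg j * w') (by omega) h with ⟨h1, h2⟩ | ⟨hik, t, rfl, h2⟩ | ⟨hik, t, rfl, h2⟩
  · subst h1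
    rcases hij with h | h <;> rcases hjk with h' | h' <;> omega
  · have hl2 := congrArg plen h2
    simp only [plen_mul, plen_sg] at hl hl2 hN
    obtain ⟨r, rfl, rfl⟩ := (IH j i w' t (by omega) h2).far hij.symm
    refine .inr (.inl ⟨hik, sg j * (sg k * r), ?_, ?_⟩)
    · rw [hx, sg_braid hjk]
    · rw [hz, sg_comm hik.symm, sg_comm hij.symm]
  · have hl2 := congrArg plen h2
    simp only [plen_mul, plen_sg] at hl hl2 hN
    obtain ⟨r, rfl, h3⟩ := (IH j i w' (sg k * t) (by omega) h2).far hij.symm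
    have hl3 := congrArg plen h3
    simp only [plen_mul, plen_sg] at hl hl2 hl3 hN
    obtain ⟨q, rfl, rfl⟩ := (IH k j t r (by omega) h3).adj hjk.symm
    refine .inr (.inr ⟨hik, sg j * (sg k * (sg i * q)), ?_, ?_⟩)
    · rw [hx, sg_comm hij, sg_braid hjk, sg_braid hik.symm, sg_comm hij.symm]
    · rw [hz, sg_braid hik.symm, sg_comm hij.symm, sg_comm hij q, sg_braid hjk]

theorem GK.trans {m : ℕ} {N : ℕ}
    (IH : ∀ (i j : Fin m) (x y : PMon m), plen x < N → sg i * x = sg j * y → GK i j x y)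
    {i j k : Fin m} {x y z : PMon m} (hN : plen y ≤ N) (h1 : GK i j x y) (h2 : GK j k y z) :
    GK i k x z := by
  rcases h1 with ⟨rfl, rfl⟩ | ⟨hij, w, hx, hy⟩ | ⟨hij, w, hx, hy⟩
  · exact h2
  · rcases h2 with ⟨rfl, rfl⟩ | ⟨hjk, w', hy', hz⟩ | ⟨hjk, w', hy', hz⟩
    · exact .inr (.inl ⟨hij, w, hx, hy⟩)
    · have hl := congrArg plen hy
      simp only [plen_mul, plen_sg] at hl
      rcases IH i k w w' (by omega) (hy.symm.trans hy') with
        ⟨rfl, rfl⟩ | ⟨hik, t, rfl, rfl⟩ | ⟨hik, t, rfl, rfl⟩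
      · exact .inl ⟨rfl, hx.trans hz.symm⟩
      · exact .inr (.inl ⟨hik, sg j * t, by rw [hx, sg_comm hjk], by rw [hz, sg_comm hij.symm]⟩)
      · exact .inr (.inr ⟨hik, sg j * t, by rw [hx, sg_comm hjk, sg_comm hij.symm],
          by rw [hz, sg_comm hij.symm, sg_comm hjk]⟩)
    · exact GK.trans_aux IH hij hjk (hy ▸ hN) (hy.symm.trans hy') hx hz
  · rcases h2 with ⟨rfl, rfl⟩ | ⟨hjk, w', hy', hz⟩ | ⟨hjk, w', hy', hz⟩
    · exact .inr (.inr ⟨hij, w, hx, hy⟩)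
    · exact (GK.trans_aux IH hjk.symm hij.symm (hy' ▸ hN) (hy'.symm.trans hy) hz hx).symm
    · have hl := congrArg plen hy
      simp only [plen_mul, plen_sg] at hl
      rcases IH i k _ _ (by simp only [plen_mul, plen_sg]; omega) (hy.symm.trans hy') with
        ⟨rfl, h3⟩ | ⟨hik, t, h3, h4⟩ | ⟨hik, t, h3, h4⟩
      · have := (IH j j _ _ (by omega) h3).self
        subst this
        exact .inl ⟨rfl, hx.trans hz.symm⟩
      · have hl3 := congrArg plen h3
        have hl4 := congrArg plen h4
        simp only [plen_mul, plen_sg] at hl3 hl4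
        obtain ⟨r, rfl, rfl⟩ := (IH j k w t (by omega) h3).adj hjk
        obtain ⟨q, rfl, h5⟩ := (IH j i w' _ (by omega) h4).adj hij.symm
        simp only [plen_mul, plen_sg] at hl hl3 hl4
        have h6 := (IH j j _ _ (by simp only [plen_mul, plen_sg]; omega) h5).self
        have hl6 := congrArg plen h6
        simp only [plen_mul, plen_sg] at hl6
        obtain ⟨p, rfl, rfl⟩ := (IH k i r q (by omega) h6).far hik.symm
        refine .inr (.inl ⟨hik, sg j * (sg k * (sg i * (sg j * p))), ?_, ?_⟩)
        · rw [hx, sg_comm hik, sg_braid hij, sg_braid hjk]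
        · rw [hz, sg_comm hik.symm, sg_braid hjk.symm, sg_braid hij.symm, sg_comm hik]
      · exfalso
        rcases hij with h | h <;> rcases hjk with h' | h' <;> rcases hik with h'' | h'' <;> omega

theorem BStep.gk {m : ℕ} {j : Fin m} {v c : List (Fin m)} (h : BStep (j :: v) c) :
    ∃ k z, c = k :: z ∧ GK j k (wmk v) (wmk z) := by
  cases h with
  | comm i j w h => exact ⟨_, _, rfl, .inr (.inl ⟨h, wmk w, rfl, rfl⟩)⟩
  | braid i j w h => exact ⟨_, _, rfl, .inr (.inr ⟨h, wmk w, rfl, rfl⟩)⟩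
  | cons i h => exact ⟨_, _, rfl, .inl ⟨rfl, wmk_eq.2 (.single h)⟩⟩

theorem garside_lemma_aux {m : ℕ} (N : ℕ) :
    ∀ (i j : Fin m) (x y : PMon m), plen x < N → sg i * x = sg j * y → GK i j x y := by
  induction N with
  | zero => intro i j x y h; omega
  | succ N IH =>
    intro i j x y hl h
    obtain ⟨u, rfl⟩ := wmk_surj x
    obtain ⟨v, rfl⟩ := wmk_surj y
    rw [← wmk_cons, ← wmk_cons, wmk_eq] at h
    suffices H : ∀ b, WEq (i :: u) b → ∃ j v, b = j :: v ∧ GK i j (wmk u) (wmk v) by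
      obtain ⟨j', v', h1, h2⟩ := H _ h
      injection h1 with h3 h4
      subst h3; subst h4; exact h2
    intro b hb
    induction hb with
    | refl => exact ⟨i, u, rfl, .inl ⟨rfl, rfl⟩⟩
    | @tail b c hb hbc ih =>
      obtain ⟨j, v, rfl, h1⟩ := ih
      obtain ⟨k, z, rfl, h2⟩ := hbc.gk
      refine ⟨k, z, rfl, GK.trans IH ?_ h1 h2⟩
      have := WEq.length_eq hb
      simp only [List.length_cons] at this
      rw [plen_wmk] at hl ⊢
      omega

theorem garside_lemma {m : ℕ} {i j : Fin m} {x y : PMon m} (h : sg i * x = sg j * y) :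
    GK i j x y := garside_lemma_aux (plen x + 1) i j x y (by omega) h

theorem pmon_left_cancel {m : ℕ} (a : PMon m) {x y : PMon m} (h : a * x = a * y) : x = y := by
  obtain ⟨u, rfl⟩ := wmk_surj a
  induction u with
  | nil => simpa [wmk_nil] using h
  | cons i u ih =>
    rw [wmk_cons, mul_assoc, mul_assoc] at h
    exact ih (garside_lemma h).self

/-! ### The Garside element of the positive monoid -/

/-- generators with a natural number index -/
def sgn (m : ℕ) (i : ℕ) : PMon m := if h : i < m then sg ⟨i, h⟩ else 1

/-- `s_0 ⋯ s_{j-1}` -/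
def pB (m j : ℕ) : PMon m := ((List.range j).map (sgn m)).prod

/-- the partial Garside elements -/
def pD (m j : ℕ) : PMon m := (((List.range j).reverse).map (fun j => pB m (j + 1))).prod

theorem pB_zero (m : ℕ) : pB m 0 = 1 := rfl
theorem pB_succ (m j : ℕ) : pB m (j + 1) = pB m j * sgn m j := by
  simp [pB, List.range_succ]
theorem pD_zero (m : ℕ) : pD m 0 = 1 := rfl
theorem pD_succ (m j : ℕ) : pD m (j + 1) = pB m (j + 1) * pD m j := by
  simp [pD, List.range_succ]

theorem sgn_comm {m i j : ℕ} (h : i + 1 < j) (hj : j < m) :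
    sgn m j * sgn m i = sgn m i * sgn m j := by
  have := sg_comm (i := (⟨j, hj⟩ : Fin m)) (j := ⟨i, by omega⟩) (.inr h) 1
  simpa [sgn, hj, show i < m by omega] using this

theorem sgn_braid {m i : ℕ} (hj : i + 1 < m) :
    sgn m (i + 1) * sgn m i * sgn m (i + 1) = sgn m i * sgn m (i + 1) * sgn m i := by
  have := sg_braid (i := (⟨i + 1, hj⟩ : Fin m)) (j := ⟨i, by omega⟩) (.inr rfl) 1
  simpa [sgn, hj, show i < m by omega, mul_assoc] using this

theorem pB_comm {m j k : ℕ} (h : j < k) (hk : k < m) :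
    sgn m k * pB m j = pB m j * sgn m k := by
  induction j with
  | zero => simp [pB_zero]
  | succ j ih =>
    rw [pB_succ, ← mul_assoc, ih (by omega), mul_assoc, sgn_comm h hk, mul_assoc]

theorem pB_shift {m i j : ℕ} (h : i + 1 < j) (hj : j ≤ m) :
    sgn m (i + 1) * pB m j = pB m j * sgn m i := by
  induction j with
  | zero => omega
  | succ j ih =>
    rcases Nat.lt_or_ge (i + 1) j with h' | h'
    · rw [pB_succ, ← mul_assoc, ih h' (by omega), mul_assoc, mul_assoc,
        sgn_comm h' (by omega)]
    · obtain rfl : j = i + 1 := by omega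
      rw [pB_succ, pB_succ]
      calc sgn m (i + 1) * (pB m i * sgn m i * sgn m (i + 1))
          = (sgn m (i + 1) * pB m i) * sgn m i * sgn m (i + 1) := by simp only [mul_assoc]
        _ = pB m i * (sgn m (i + 1) * sgn m i * sgn m (i + 1)) := by
            rw [pB_comm (by omega) (by omega)]; simp only [mul_assoc]
        _ = _ := by rw [sgn_braid (by omega)]; simp only [mul_assoc]

theorem pD_comm {m j k : ℕ} (h : j < k) (hk : k < m) :
    sgn m k * pD m j = pD m j * sgn m k := by
  induction j with
  | zero => simp [pD_zero]
  | succ j ih =>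
    rw [pD_succ, ← mul_assoc, pB_comm h hk, mul_assoc, ih (by omega), mul_assoc]

/-- `s_1 ⋯ s_j` -/
def pB' (m : ℕ) : ℕ → PMon m
  | 0 => 1
  | j + 1 => pB' m j * sgn m (j + 1)

theorem pB_eq (m j : ℕ) : pB m (j + 1) = sgn m 0 * pB' m j := by
  induction j with
  | zero => simp [pB_succ, pB_zero, pB']
  | succ j ih => rw [pB_succ, ih, pB', mul_assoc]

theorem pB'_shift {m i j : ℕ} (h : i < j) (hj : j ≤ m) : pB' m i * pB m j = pB m j * pB m i := by
  induction i with
  | zero => simp [pB', pB_zero]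
  | succ i ih =>
    rw [pB', mul_assoc, pB_shift h hj, ← mul_assoc, ih (by omega), mul_assoc, pB_succ]

theorem pD_flip {m i j : ℕ} (h : i < j) (hj : j ≤ m) :
    pD m j * sgn m i = sgn m (j - 1 - i) * pD m j := by
  induction j generalizing i with
  | zero => omega
  | succ j ih =>
    rcases Nat.lt_or_ge i j with h' | h'
    · rw [pD_succ, mul_assoc, ih h' (by omega), ← mul_assoc,
        ← pB_shift (by omega) hj, mul_assoc]
      congr 2
      omega
    · obtain rfl : i = j := by omega
      have e : i + 1 - 1 - i = 0 := by omega
      rw [e]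
      cases i with
      | zero => simp [pD_succ, pD_zero, pB_succ, pB_zero]
      | succ i =>
        rw [pD_succ, pD_succ]
        calc pB m (i + 2) * (pB m (i + 1) * pD m i) * sgn m (i + 1)
            = pB m (i + 2) * (pB m (i + 1) * (pD m i * sgn m (i + 1))) := by
              simp only [mul_assoc]
          _ = pB m (i + 2) * (pB m (i + 1) * sgn m (i + 1)) * pD m i := by
              rw [← pD_comm (by omega) (by omega)]; simp only [mul_assoc]
          _ = sgn m 0 * (pB' m (i + 1) * pB m (i + 2)) * pD m i := by
              rw [← pB_succ]
              conv_lhs => rw [pB_eq m (i + 1)]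
              rw [pB_eq m (i + 1)]
              simp only [mul_assoc]
          _ = _ := by rw [pB'_shift (by omega) (by omega)]; simp only [mul_assoc]

theorem pD_dvd {m i j : ℕ} (h : i < j) (hj : j ≤ m) : ∃ q, pD m j = sgn m i * q := by
  induction j generalizing i with
  | zero => omega
  | succ j ih =>
    cases i with
    | zero => exact ⟨pB' m j * pD m j, by rw [pD_succ, pB_eq, mul_assoc]⟩
    | succ i =>
      obtain ⟨q, hq⟩ := ih (i := i) (by omega) (by omega)
      refine ⟨pB m (j + 1) * q, ?_⟩
      rw [pD_succ, hq, ← mul_assoc, ← mul_assoc, pB_shift h hj]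

/-- the Garside element -/
def pΔ (m : ℕ) : PMon m := pD m m

theorem pΔ_flip {m : ℕ} (i : Fin m) : pΔ m * sg i = sg i.rev * pΔ m := by
  have := pD_flip (m := m) i.2 le_rfl
  have h1 : sgn m i = sg i := by simp [sgn]
  have h2 : sgn m (m - 1 - i) = sg i.rev := by
    rw [sgn, dif_pos (by omega)]
    congr 1
    ext
    simp only [Fin.val_rev]
    omega
  rwa [h1, h2] at this

theorem pΔ_dvd {m : ℕ} (i : Fin m) : ∃ q, pΔ m = sg i * q := by
  have := pD_dvd (m := m) i.2 le_rfl
  have h1 : sgn m i = sg i := by simp [sgn]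
  rwa [h1] at this

/-- the central element `Δ²` -/
def pC (m : ℕ) : PMon m := pΔ m * pΔ m

theorem pC_central {m : ℕ} (x : PMon m) : pC m * x = x * pC m := by
  obtain ⟨u, rfl⟩ := wmk_surj x
  induction u with
  | nil => simp [wmk_nil]
  | cons i u ih =>
    rw [wmk_cons, mul_assoc, ← ih, ← mul_assoc, ← mul_assoc]
    congr 1
    rw [pC, mul_assoc, pΔ_flip, ← mul_assoc, pΔ_flip, Fin.rev_rev, mul_assoc]

theorem pC_pow_central {m : ℕ} (r : ℕ) (x : PMon m) : pC m ^ r * x = x * pC m ^ r :=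
  ((show Commute (pC m) x from pC_central x).pow_left r).eq

theorem exists_mul_eq_pC {m : ℕ} (x : PMon m) : ∃ y r, x * y = pC m ^ r := by
  obtain ⟨u, rfl⟩ := wmk_surj x
  induction u with
  | nil => exact ⟨1, 0, by simp [wmk_nil]⟩
  | cons i u ih =>
    obtain ⟨y, r, h⟩ := ih
    obtain ⟨q, hq⟩ := pΔ_dvd i
    refine ⟨y * (q * pΔ m), r + 1, ?_⟩
    calc wmk (i :: u) * (y * (q * pΔ m)) = sg i * (wmk u * y) * (q * pΔ m) := by
          rw [wmk_cons]; simp only [mul_assoc]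
      _ = pC m ^ r * ((sg i * q) * pΔ m) := by
          rw [h, ← pC_pow_central]; simp only [mul_assoc]
      _ = _ := by rw [← hq, pow_succ]; rfl

theorem pmon_right_cancel {m : ℕ} (a : PMon m) {x y : PMon m} (h : x * a = y * a) : x = y := by
  obtain ⟨b, r, hb⟩ := exists_mul_eq_pC a
  have : pC m ^ r * x = pC m ^ r * y := by
    rw [pC_pow_central, pC_pow_central, ← hb, ← mul_assoc, ← mul_assoc, h]
  exact pmon_left_cancel _ this

/-- The positive monoid satisfies the Ore condition. -/
noncomputable instance pmonOre (m : ℕ) : OreLocalization.OreSet (⊤ : Submonoid (PMon m)) where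
  ore_right_cancel := fun r₁ r₂ s h => ⟨1, by rw [pmon_right_cancel _ h]⟩
  oreNum := fun r s => r * (exists_mul_eq_pC (s : PMon m)).choose
  oreDenom := fun r s =>
    ⟨pC m ^ (exists_mul_eq_pC (s : PMon m)).choose_spec.choose, trivial⟩
  ore_eq := fun r s => by
    have h := (exists_mul_eq_pC (s : PMon m)).choose_spec.choose_spec
    set t := (exists_mul_eq_pC (s : PMon m)).choose
    set k := (exists_mul_eq_pC (s : PMon m)).choose_spec.choose
    have h2 : t * (s : PMon m) = pC m ^ k := by
      apply pmon_left_cancel (s : PMon m)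
      rw [← mul_assoc, h, pC_pow_central]
    change pC m ^ k * r = r * t * s
    rw [mul_assoc, h2, pC_pow_central]

theorem numeratorHom_inj {m : ℕ} {x y : PMon m}
    (h : (OreLocalization.numeratorHom x : OreLocalization (⊤ : Submonoid (PMon m)) (PMon m)) =
      OreLocalization.numeratorHom y) : x = y := by
  rw [OreLocalization.numeratorHom_apply, OreLocalization.numeratorHom_apply,
    OreLocalization.oreDiv_eq_iff] at h
  obtain ⟨u, v, h1, h2⟩ := h
  simp only [OneMemClass.coe_one, mul_one] at h2
  rw [Submonoid.smul_def, smul_eq_mul, smul_eq_mul, h2] at h1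
  exact (pmon_left_cancel _ h1).symm

/-! ### lcm and gcd in the positive monoid -/

theorem exists_local_lcm {m : ℕ} {i j : Fin m} {x y : PMon m} (h : sg i * x = sg j * y) :
    ∃ p q, sg i * p = sg j * q ∧ ∀ x' y', sg i * x' = sg j * y' → ∃ w, x' = p * w ∧ y' = q * w := by
  rcases garside_lemma h with ⟨rfl, -⟩ | ⟨hij, -⟩ | ⟨hij, -⟩
  · exact ⟨1, 1, rfl, fun x' y' h => ⟨x', by simp, by simp [pmon_left_cancel _ h]⟩⟩
  · refine ⟨sg j, sg i, by simpa using sg_comm hij 1, fun x' y' h => ?_⟩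
    exact (garside_lemma h).far hij
  · refine ⟨sg j * sg i, sg i * sg j, by simpa using sg_braid hij 1, fun x' y' h => ?_⟩
    obtain ⟨w, h1, h2⟩ := (garside_lemma h).adj hij
    exact ⟨w, by rw [h1, mul_assoc], by rw [h2, mul_assoc]⟩

/-- `m` is a least common right multiple of `a` and `b`. -/
def IsLcm' {m : ℕ} (a b c : PMon m) : Prop :=
  (∃ p, a * p = c) ∧ (∃ p, b * p = c) ∧
    ∀ d, (∃ p, a * p = d) → (∃ p, b * p = d) → ∃ p, c * p = d

theorem exists_lcm_aux {m : ℕ} (N : ℕ) : ∀ a b p q : PMon m, plen (a * p) < N → a * p = b * q →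
    ∃ c, IsLcm' a b c := by
  induction N with
  | zero => intro a b p q h; omega
  | succ N IH =>
    intro a b p q hl h
    rcases pmon_cases a with rfl | ⟨i, a, rfl⟩
    · exact ⟨b, ⟨b, by simp⟩, ⟨1, by simp⟩, fun d _ h => h⟩
    rcases pmon_cases b with rfl | ⟨j, b, rfl⟩
    · exact ⟨sg i * a, ⟨1, by simp⟩, ⟨sg i * a, by simp⟩, fun d h _ => h⟩
    rw [mul_assoc] at h hl
    rw [mul_assoc] at h
    rw [plen_mul, plen_sg] at hl
    obtain ⟨e, f, hef, hmin⟩ := exists_local_lcm h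
    obtain ⟨w, h1, h2⟩ := hmin _ _ h
    have hl2 := congrArg plen h
    rw [plen_mul (sg i), plen_mul (sg j), plen_sg, plen_sg] at hl2
    obtain ⟨c1, ⟨p1, h11⟩, ⟨p2, h12⟩, h13⟩ := IH a e p w (by omega) h1
    obtain ⟨c2, ⟨q1, h21⟩, ⟨q2, h22⟩, h23⟩ := IH b f q w (by omega) h2
    -- `e * p2 = c1`, `f * q2 = c2`
    obtain ⟨r1, hr1⟩ := h13 (a * p) ⟨p, rfl⟩ ⟨w, h1.symm⟩
    obtain ⟨r2, hr2⟩ := h23 (b * q) ⟨q, rfl⟩ ⟨w, h2.symm⟩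
    have e1 : p2 * r1 = w := by
      apply pmon_left_cancel e
      rw [← mul_assoc, h12, hr1, h1]
    have e2 : q2 * r2 = w := by
      apply pmon_left_cancel f
      rw [← mul_assoc, h22, hr2, h2]
    have hlw := congrArg plen h1
    rw [plen_mul e] at hlw
    obtain ⟨c3, ⟨p3, h31⟩, ⟨p4, h32⟩, h33⟩ := IH p2 q2 r1 r2 (by rw [e1]; omega) (e1.trans e2.symm)
    refine ⟨sg i * e * c3, ⟨p1 * p3, ?_⟩, ⟨q1 * p4, ?_⟩, ?_⟩
    · rw [← h31]
      calc sg i * a * (p1 * p3) = sg i * (a * p1) * p3 := by simp only [mul_assoc]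
        _ = _ := by rw [h11, ← h12]; simp only [mul_assoc]
    · rw [← h32, hef]
      calc sg j * b * (q1 * p4) = sg j * (b * q1) * p4 := by simp only [mul_assoc]
        _ = _ := by rw [h21, ← h22]; simp only [mul_assoc]
    · rintro d ⟨x, hx⟩ ⟨y, hy⟩
      have hxy : sg i * (a * x) = sg j * (b * y) := by
        rw [← mul_assoc, ← mul_assoc, hx, hy]
      obtain ⟨v, hv1, hv2⟩ := hmin _ _ hxy
      obtain ⟨s1, hs1⟩ := h13 (a * x) ⟨x, rfl⟩ ⟨v, hv1.symm⟩
      obtain ⟨s2, hs2⟩ := h23 (b * y) ⟨y, rfl⟩ ⟨v, hv2.symm⟩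
      have e3 : p2 * s1 = v := by
        apply pmon_left_cancel e
        rw [← mul_assoc, h12, hs1, hv1]
      have e4 : q2 * s2 = v := by
        apply pmon_left_cancel f
        rw [← mul_assoc, h22, hs2, hv2]
      obtain ⟨t, ht⟩ := h33 v ⟨s1, e3⟩ ⟨s2, e4⟩
      refine ⟨t, ?_⟩
      rw [mul_assoc, ht, mul_assoc, ← hv1, ← mul_assoc, hx]

theorem exists_gcd {m : ℕ} (a b : PMon m) : ∃ d, (∃ p, d * p = a) ∧ (∃ p, d * p = b) ∧
    ∀ c, (∃ p, c * p = a) → (∃ p, c * p = b) → ∃ p, c * p = d := by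
  classical
  let S : Set ℕ := {k | ∃ d : PMon m, plen d = k ∧ (∃ p, d * p = a) ∧ (∃ p, d * p = b)}
  have hne : S.Nonempty := ⟨0, 1, by rw [← wmk_nil]; rfl, ⟨a, by simp⟩, ⟨b, by simp⟩⟩
  have hbd : BddAbove S := by
    refine ⟨plen a, ?_⟩
    rintro k ⟨d, rfl, ⟨p, rfl⟩, -⟩
    rw [plen_mul]; omega
  obtain ⟨d, hd, ⟨p, hp⟩, ⟨q, hq⟩⟩ := Nat.sSup_mem hne hbd
  refine ⟨d, ⟨p, hp⟩, ⟨q, hq⟩, ?_⟩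
  rintro c ⟨p', hp'⟩ ⟨q', hq'⟩
  obtain ⟨l, ⟨x, hx⟩, ⟨y, hy⟩, hl⟩ := exists_lcm_aux _ d c p p' (Nat.lt_succ_self _)
    (hp.trans hp'.symm)
  have hmem : plen l ∈ S := ⟨l, rfl, hl a ⟨p, hp⟩ ⟨p', hp'⟩, hl b ⟨q, hq⟩ ⟨q', hq'⟩⟩
  have hle := le_csSup hbd hmem
  rw [← hd, ← hx, plen_mul] at hle
  have hx1 := plen_eq_zero (x := x) (by omega)
  rw [hx1, mul_one] at hx
  exact ⟨y, hy.trans hx.symm⟩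

/-! ### The positive monoid embeds in the braid group -/

theorem σ_comm {i j : Fin (n - 1)} (h : Far i j) : σ (n := n) i * σ j = σ j * σ i := by
  have key : ∀ i j : Fin (n - 1), (i : ℕ) + 1 < j → σ (n := n) i * σ j = σ j * σ i := by
    intro i j h
    have h1 : PresentedGroup.mk (braidRels n)
        (.of i * .of j * (.of i)⁻¹ * (.of j)⁻¹) = 1 :=
      PresentedGroup.one_of_mem (.inl ⟨i, j, h, rfl⟩)
    rw [map_mul, map_mul, map_mul, map_inv, map_inv, mul_inv_eq_one, mul_inv_eq_iff_eq_mul] at h1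
    exact h1
  rcases h with h | h
  · exact key i j h
  · exact (key j i h).symm

theorem σ_braid {i j : Fin (n - 1)} (h : Adj i j) :
    σ (n := n) i * σ j * σ i = σ j * σ i * σ j := by
  have key : ∀ i j : Fin (n - 1), (i : ℕ) + 1 = j →
      σ (n := n) i * σ j * σ i = σ j * σ i * σ j := by
    intro i j h
    have h1 : PresentedGroup.mk (braidRels n)
        ((.of i * .of j * .of i) * (.of j * .of i * .of j)⁻¹) = 1 :=
      PresentedGroup.one_of_mem (.inr ⟨i, j, h, rfl⟩)
    rw [map_mul, map_inv, mul_inv_eq_one] at h1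
    simp only [map_mul] at h1
    exact h1
  rcases h with h | h
  · exact key i j h
  · exact (key j i h).symm

theorem BStep.prod_eq {u v : List (Fin (n - 1))} (h : BStep u v) :
    (u.map (σ (n := n))).prod = (v.map (σ (n := n))).prod := by
  induction h with
  | comm i j w h => simp only [List.map_cons, List.prod_cons, ← mul_assoc, σ_comm h]
  | braid i j w h => simp only [List.map_cons, List.prod_cons, ← mul_assoc, σ_braid h]
  | cons i _ ih => simp only [List.map_cons, List.prod_cons, ih]

theorem WEq.prod_eq {u v : List (Fin (n - 1))} (h : WEq u v) :
    (u.map (σ (n := n))).prod = (v.map (σ (n := n))).prod := by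
  induction h with
  | refl => rfl
  | tail _ h ih => exact ih.trans h.prod_eq

/-- The natural map from the positive monoid. -/
def toG (n : ℕ) : PMon (n - 1) →* BraidGroup n :=
  (wCon (n - 1)).lift (FreeMonoid.lift (σ (n := n))) (by
    intro u v h
    change FreeMonoid.lift (σ (n := n)) u = FreeMonoid.lift (σ (n := n)) v
    rw [FreeMonoid.lift_apply, FreeMonoid.lift_apply]
    exact WEq.prod_eq h)

theorem toG_wmk (u : List (Fin (n - 1))) : toG n (wmk u) = (u.map σ).prod :=
  FreeMonoid.lift_apply _ _

theorem toG_sg (i : Fin (n - 1)) : toG n (sg i) = σ i := by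
  rw [sg, toG_wmk]; simp

/-- The map to the Ore localization. -/
noncomputable def fromG (n : ℕ) : BraidGroup n →*
    (OreLocalization (⊤ : Submonoid (PMon (n - 1))) (PMon (n - 1)))ˣ :=
  PresentedGroup.toGroup
    (f := fun i => (OreLocalization.numerator_isUnit
      (⟨sg i, trivial⟩ : (⊤ : Submonoid (PMon (n - 1))))).unit) (by
    rintro r (⟨i, j, h, rfl⟩ | ⟨i, j, h, rfl⟩)
    · simp only [map_mul, map_inv, FreeGroup.lift_apply_of]
      rw [mul_inv_eq_one, mul_inv_eq_iff_eq_mul]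
      ext
      simp only [Units.val_mul, IsUnit.unit_spec, ← map_mul]
      congr 1
      simpa using sg_comm (i := i) (j := j) (.inl h) 1
    · simp only [map_mul, map_inv, FreeGroup.lift_apply_of]
      rw [mul_inv_eq_one]
      ext
      simp only [Units.val_mul, IsUnit.unit_spec, ← map_mul]
      congr 1
      simpa [mul_assoc] using sg_braid (i := i) (j := j) (.inl h) 1)

theorem fromG_σ (i : Fin (n - 1)) :
    (fromG n (σ i)).val = OreLocalization.numeratorHom (sg i) := by
  rw [fromG, σ, PresentedGroup.toGroup.of]
  rfl

theorem fromG_toG (x : PMon (n - 1)) :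
    (fromG n (toG n x)).val = OreLocalization.numeratorHom x := by
  obtain ⟨u, rfl⟩ := wmk_surj x
  induction u with
  | nil => rw [wmk_nil, map_one, map_one, map_one]; rfl
  | cons i u ih => rw [wmk_cons, map_mul, map_mul, Units.val_mul, ih, toG_sg, fromG_σ, map_mul]

theorem toG_inj {x y : PMon (n - 1)} (h : toG n x = toG n y) : x = y := by
  apply numeratorHom_inj
  rw [← fromG_toG, ← fromG_toG, h]

theorem isPositive_iff {x : BraidGroup n} : IsPositive x ↔ ∃ y, toG n y = x := by
  constructor
  · intro h
    change x ∈ positives n at h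
    have : positives n ≤ MonoidHom.mrange (toG n) := by
      rw [positives, Submonoid.closure_le]
      rintro _ ⟨i, rfl⟩
      exact ⟨sg i, toG_sg i⟩
    exact this h
  · rintro ⟨y, rfl⟩
    obtain ⟨u, rfl⟩ := wmk_surj y
    rw [toG_wmk]
    apply Submonoid.list_prod_mem
    simp only [List.mem_map]
    rintro _ ⟨i, -, rfl⟩
    exact Submonoid.subset_closure ⟨i, rfl⟩

theorem toG_sgn (i : ℕ) : toG n (sgn (n - 1) i) = σ' n i := by
  unfold sgn σ'
  split_ifs
  · exact toG_sg _
  · exact map_one _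

theorem toG_pB (j : ℕ) : toG n (pB (n - 1) j) = ((List.range j).map (σ' n)).prod := by
  rw [pB, map_list_prod, List.map_map]
  congr 2
  funext i
  exact toG_sgn i

theorem toG_pΔ : toG n (pΔ (n - 1)) = Δ n := by
  rw [pΔ, pD, Δ, map_list_prod, List.map_map]
  congr 2
  funext i
  exact toG_pB (i + 1)

theorem pos_one : IsPositive (1 : BraidGroup n) := one_mem (positives n)
theorem pos_mul {x y : BraidGroup n} (hx : IsPositive x) (hy : IsPositive y) :
    IsPositive (x * y) := (positives n).mul_mem hx hy
theorem pos_σ (i : Fin (n - 1)) : IsPositive (σ i) := Submonoid.subset_closure ⟨i, rfl⟩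
theorem pos_Δ : IsPositive (Δ n) := isPositive_iff.2 ⟨_, toG_pΔ⟩

theorem pos_cases {x : BraidGroup n} (h : IsPositive x) (h1 : x ≠ 1) :
    ∃ i y, IsPositive y ∧ x = σ i * y := by
  obtain ⟨y, rfl⟩ := isPositive_iff.1 h
  rcases pmon_cases y with rfl | ⟨i, y, rfl⟩
  · exact absurd (map_one _) h1
  · exact ⟨i, toG n y, isPositive_iff.2 ⟨y, rfl⟩, by rw [map_mul, toG_sg]⟩

theorem Δ_σ (i : Fin (n - 1)) : Δ n * σ i = σ i.rev * Δ n := by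
  have := congrArg (toG n) (pΔ_flip i)
  rwa [map_mul, map_mul, toG_sg, toG_sg, toG_pΔ] at this

theorem Δ_dvd (i : Fin (n - 1)) : ∃ q, IsPositive q ∧ σ i * q = Δ n := by
  obtain ⟨q, hq⟩ := pΔ_dvd i
  have := congrArg (toG n) hq
  rw [map_mul, toG_sg, toG_pΔ] at this
  exact ⟨_, isPositive_iff.2 ⟨q, rfl⟩, this.symm⟩

/-- The exponent sum homomorphism. -/
def lenHom (n : ℕ) : BraidGroup n →* Multiplicative ℤ :=
  PresentedGroup.toGroup (f := fun _ => Multiplicative.ofAdd (1 : ℤ)) (by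
    rintro r (⟨i, j, h, rfl⟩ | ⟨i, j, h, rfl⟩)
    · simp
    · simp)

/-- The exponent sum. -/
def len (x : BraidGroup n) : ℤ := Multiplicative.toAdd (lenHom n x)

theorem len_mul (x y : BraidGroup n) : len (x * y) = len x + len y := by simp [len]
theorem len_inv (x : BraidGroup n) : len x⁻¹ = - len x := by simp [len]
theorem len_one : len (1 : BraidGroup n) = 0 := by simp [len]
theorem len_zpow (x : BraidGroup n) (k : ℤ) : len (x ^ k) = k * len x := by simp [len]
theorem len_σ (i : Fin (n - 1)) : len (σ i) = 1 := by
  simp [len, lenHom, σ]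

theorem len_toG (y : PMon (n - 1)) : len (toG n y) = plen y := by
  obtain ⟨u, rfl⟩ := wmk_surj y
  induction u with
  | nil => simp [wmk_nil, len_one]; rw [← wmk_nil, plen_wmk]; rfl
  | cons i u ih => rw [wmk_cons, map_mul, len_mul, ih, toG_sg, len_σ, plen_mul, plen_sg]; simp

theorem len_nonneg {x : BraidGroup n} (h : IsPositive x) : 0 ≤ len x := by
  obtain ⟨y, rfl⟩ := isPositive_iff.1 h
  rw [len_toG]; omega

theorem eq_one_of_len {x : BraidGroup n} (h : IsPositive x) (h0 : len x ≤ 0) : x = 1 := by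
  obtain ⟨y, rfl⟩ := isPositive_iff.1 h
  rw [len_toG] at h0
  rw [plen_eq_zero (x := y) (by omega), map_one]

theorem len_Δ (hn : 2 ≤ n) : 0 < len (Δ n) := by
  obtain ⟨q, hq, h⟩ := Δ_dvd (n := n) ⟨0, by omega⟩
  rw [← h, len_mul, len_σ]
  have := len_nonneg hq
  omega

theorem exists_pos_gcd {a b : BraidGroup n} (ha : IsPositive a) (hb : IsPositive b) :
    ∃ d, IsPositive d ∧ LeftDvd d a ∧ LeftDvd d b ∧
      ∀ c, IsPositive c → LeftDvd c a → LeftDvd c b → LeftDvd c d := by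
  obtain ⟨a, rfl⟩ := isPositive_iff.1 ha
  obtain ⟨b, rfl⟩ := isPositive_iff.1 hb
  have key : ∀ x y : PMon (n - 1), (∃ p, x * p = y) ↔ LeftDvd (toG n x) (toG n y) := by
    intro x y
    constructor
    · rintro ⟨p, rfl⟩
      exact ⟨toG n p, isPositive_iff.2 ⟨p, rfl⟩, (map_mul _ _ _).symm⟩
    · rintro ⟨p, hp, h⟩
      obtain ⟨p, rfl⟩ := isPositive_iff.1 hp
      exact ⟨p, toG_inj (by rw [map_mul, h])⟩
  obtain ⟨d, h1, h2, h3⟩ := exists_gcd a b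
  refine ⟨toG n d, isPositive_iff.2 ⟨d, rfl⟩, (key _ _).1 h1, (key _ _).1 h2, ?_⟩
  intro c hc hca hcb
  obtain ⟨c, rfl⟩ := isPositive_iff.1 hc
  exact (key _ _).1 (h3 c ((key _ _).2 hca) ((key _ _).2 hcb))

/-! ### The prefix order on the braid group -/

infix:50 "≼" => LeftDvd

theorem le_iff {a b : BraidGroup n} : a ≼ b ↔ IsPositive (a⁻¹ * b) := by
  constructor
  · rintro ⟨p, hp, rfl⟩; simpa using hp
  · intro h; exact ⟨_, h, by simp⟩

theorem le_rfl' (a : BraidGroup n) : a ≼ a := ⟨1, pos_one, by simp⟩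

theorem le_tr {a b c : BraidGroup n} (h : a ≼ b) (h' : b ≼ c) : a ≼ c := by
  obtain ⟨p, hp, rfl⟩ := h
  obtain ⟨q, hq, rfl⟩ := h'
  exact ⟨p * q, pos_mul hp hq, by rw [mul_assoc]⟩

theorem le_len {a b : BraidGroup n} (h : a ≼ b) : len a ≤ len b := by
  obtain ⟨p, hp, rfl⟩ := h
  rw [len_mul]
  have := len_nonneg hp
  omega

theorem le_eq_of_len {a b : BraidGroup n} (h : a ≼ b) (hl : len b ≤ len a) : a = b := by
  obtain ⟨p, hp, rfl⟩ := h
  rw [len_mul] at hl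
  rw [eq_one_of_len hp (by omega), mul_one]

theorem le_antisymm' {a b : BraidGroup n} (h : a ≼ b) (h' : b ≼ a) : a = b :=
  le_eq_of_len h (le_len h')

theorem mul_le_iff (c : BraidGroup n) {a b : BraidGroup n} : c * a ≼ c * b ↔ a ≼ b := by
  rw [le_iff, le_iff]
  simp [mul_assoc]

theorem le_mul_iff (c : BraidGroup n) {a b : BraidGroup n} : a ≼ c * b ↔ c⁻¹ * a ≼ b := by
  rw [le_iff, le_iff]
  simp [mul_assoc]

theorem one_le_iff {a : BraidGroup n} : 1 ≼ a ↔ IsPositive a := by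
  rw [le_iff]; simp

theorem le_mul_pos (a : BraidGroup n) {b : BraidGroup n} (h : 1 ≼ b) : a ≼ a * b :=
  ⟨b, one_le_iff.1 h, rfl⟩

theorem Δ_conj_σ (i : Fin (n - 1)) : Δ n * σ i * (Δ n)⁻¹ = σ i.rev := by
  rw [Δ_σ]; simp

theorem Δ_conj_σ' (i : Fin (n - 1)) : (Δ n)⁻¹ * σ i * Δ n = σ i.rev := by
  have := Δ_σ (n := n) i.rev
  rw [Fin.rev_rev] at this
  rw [mul_assoc, ← this]; simp

theorem pos_conj {x : BraidGroup n} (h : IsPositive x) : IsPositive (Δ n * x * (Δ n)⁻¹) := by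
  induction h using Submonoid.closure_induction with
  | mem x h => obtain ⟨i, rfl⟩ := h; rw [Δ_conj_σ]; exact pos_σ _
  | one => simpa using pos_one
  | mul x y _ _ hx hy => simpa [mul_assoc] using pos_mul hx hy

theorem pos_conj' {x : BraidGroup n} (h : IsPositive x) : IsPositive ((Δ n)⁻¹ * x * Δ n) := by
  induction h using Submonoid.closure_induction with
  | mem x h => obtain ⟨i, rfl⟩ := h; rw [Δ_conj_σ']; exact pos_σ _
  | one => simpa using pos_one
  | mul x y _ _ hx hy => simpa [mul_assoc] using pos_mul hx hy

theorem pos_conj_zpow (z : ℤ) {x : BraidGroup n} (h : IsPositive x) :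
    IsPositive (Δ n ^ z * x * (Δ n ^ z)⁻¹) := by
  induction z using Int.induction_on with
  | zero => simpa using h
  | succ k ih => have := pos_conj ih; rw [add_comm, zpow_add]; simpa [mul_assoc] using this
  | pred k ih =>
    have := pos_conj' ih
    rw [sub_eq_add_neg, add_comm, zpow_add]; simpa [mul_assoc] using this

theorem pos_conj_iff (z : ℤ) {x : BraidGroup n} :
    IsPositive (Δ n ^ z * x * (Δ n ^ z)⁻¹) ↔ IsPositive x := by
  refine ⟨fun h => ?_, pos_conj_zpow z⟩
  have := pos_conj_zpow (-z) h
  simpa [mul_assoc] using this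

theorem mul_Δ_le_iff (z : ℤ) {a b : BraidGroup n} : a * Δ n ^ z ≼ b * Δ n ^ z ↔ a ≼ b := by
  rw [le_iff, le_iff, ← pos_conj_iff z]
  simp [mul_assoc]

theorem le_mul_Δ_iff (z : ℤ) {a b : BraidGroup n} : a ≼ b * Δ n ^ z ↔ a * Δ n ^ (-z) ≼ b := by
  rw [← mul_Δ_le_iff z (a := a * Δ n ^ (-z))]; simp

theorem Δ2_comm (x : BraidGroup n) : Δ n * Δ n * x = x * (Δ n * Δ n) := by
  have : (MulAut.conj (Δ n * Δ n)).toMonoidHom = MonoidHom.id (BraidGroup n) := by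
    apply PresentedGroup.ext
    intro i
    change Δ n * Δ n * σ i * (Δ n * Δ n)⁻¹ = σ i
    have h1 := Δ_conj_σ (n := n) i
    have h2 := Δ_conj_σ (n := n) i.rev
    rw [Fin.rev_rev, ← h1] at h2
    conv_rhs => rw [← h2]
    simp only [mul_assoc, mul_inv_rev]
  have h := DFunLike.congr_fun this x
  change Δ n * Δ n * x * (Δ n * Δ n)⁻¹ = x at h
  exact mul_inv_eq_iff_eq_mul.1 h

theorem Δ_even_comm {z : ℤ} (hz : Even z) (x : BraidGroup n) : Δ n ^ z * x = x * Δ n ^ z := by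
  obtain ⟨k, rfl⟩ := hz
  rw [← two_mul, zpow_mul, zpow_ofNat, pow_two]
  exact (show Commute _ _ from Δ2_comm x).zpow_left k

theorem τ_eq (x : BraidGroup n) : τ n x = Δ n * x * (Δ n)⁻¹ := by
  have h : ∀ i : Fin (n - 1), τ n (σ i) = σ i.rev :=
    Classical.epsilon_spec (p := fun f : BraidGroup n →* BraidGroup n =>
      ∀ i : Fin (n - 1), f (σ i) = σ i.rev)
      ⟨(MulAut.conj (Δ n)).toMonoidHom, fun i => Δ_conj_σ i⟩
  have : τ n = (MulAut.conj (Δ n)).toMonoidHom := by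
    apply PresentedGroup.ext
    intro i
    exact (h i).trans (Δ_conj_σ i).symm
  rw [this]; rfl

theorem τpow_eq (u : ℤ) (x : BraidGroup n) : τpow u x = Δ n ^ u * x * Δ n ^ (-u) := by
  unfold τpow
  split_ifs with h
  · rw [Δ_even_comm h, mul_assoc, ← zpow_add]; simp
  · rw [Int.not_even_iff_odd] at h
    obtain ⟨k, rfl⟩ := h
    rw [τ_eq, add_comm, neg_add, zpow_add, add_comm (-1 : ℤ), zpow_add, zpow_one]
    have : Δ n ^ (2 * k) * x = x * Δ n ^ (2 * k) := Δ_even_comm (by simp) x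
    rw [mul_assoc (Δ n) (Δ n ^ (2 * k)) x, this]
    simp [mul_assoc]

theorem exists_Δ_le (x : BraidGroup n) : ∃ z : ℤ, Δ n ^ z ≼ x := by
  have hx : x ∈ Subgroup.closure (Set.range (PresentedGroup.of (rels := braidRels n))) := by
    rw [PresentedGroup.closure_range_of]; trivial
  induction hx using Subgroup.closure_induction with
  | mem x h => obtain ⟨i, rfl⟩ := h; exact ⟨0, by rw [zpow_zero, one_le_iff]; exact pos_σ i⟩
  | one => exact ⟨0, by simpa using le_rfl' 1⟩
  | mul x y _ _ hx hy =>
    obtain ⟨a, ha⟩ := hx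
    obtain ⟨b, hb⟩ := hy
    refine ⟨a + b, le_tr (b := x * Δ n ^ b) ?_ ((mul_le_iff x).2 hb)⟩
    rw [zpow_add, mul_Δ_le_iff]
    exact ha
  | inv x _ hx =>
    obtain ⟨a, p, hp, rfl⟩ := hx
    obtain ⟨p, rfl⟩ := isPositive_iff.1 hp
    obtain ⟨q, r, h⟩ := exists_mul_eq_pC p
    have h2 := congrArg (toG n) h
    rw [map_mul, map_pow, pC, map_mul, toG_pΔ, ← pow_two, ← pow_mul, ← zpow_natCast] at h2
    refine ⟨-((2 * r : ℕ) : ℤ) + (- a), ?_⟩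
    have h3 : (toG n p)⁻¹ = toG n q * Δ n ^ (-((2 * r : ℕ) : ℤ)) := by
      rw [zpow_neg, ← h2]; simp
    rw [mul_inv_rev, ← zpow_neg, zpow_add, mul_Δ_le_iff, h3]
    rw [← one_mul (Δ n ^ (-((2 * r : ℕ) : ℤ))), ← mul_assoc, mul_one, mul_Δ_le_iff, one_le_iff]
    exact isPositive_iff.2 ⟨q, rfl⟩

theorem exists_le_Δ (x : BraidGroup n) : ∃ z : ℤ, x ≼ Δ n ^ z := by
  obtain ⟨z, hz⟩ := exists_Δ_le x⁻¹
  refine ⟨-z, ?_⟩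
  rw [le_iff] at hz ⊢
  rw [← pos_conj_iff (-z)]
  simpa [mul_assoc] using hz

theorem exists_meet_aux (z : ℤ) {a b : BraidGroup n} (ha : Δ n ^ z ≼ a) (hb : Δ n ^ z ≼ b) :
    ∃ m, Δ n ^ z ≼ m ∧ m ≼ a ∧ m ≼ b ∧ ∀ c, Δ n ^ z ≼ c → c ≼ a → c ≼ b → c ≼ m := by
  obtain ⟨p, hp, rfl⟩ := ha
  obtain ⟨q, hq, rfl⟩ := hb
  obtain ⟨d, hd, h1, h2, h3⟩ := exists_pos_gcd hp hq
  refine ⟨Δ n ^ z * d, ⟨d, hd, rfl⟩, (mul_le_iff _).2 h1, (mul_le_iff _).2 h2, ?_⟩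
  rintro _ ⟨c, hc, rfl⟩ h4 h5
  rw [mul_le_iff] at *
  exact h3 c hc h4 h5

theorem Δ_zpow_le {a b : ℤ} (h : a ≤ b) : Δ n ^ a ≼ Δ n ^ b := by
  obtain ⟨k, rfl⟩ := Int.le.dest h
  rw [zpow_add]
  apply le_mul_pos
  rw [one_le_iff, zpow_natCast]
  exact (positives n).pow_mem pos_Δ k

theorem exists_meet (a b : BraidGroup n) :
    ∃ m, m ≼ a ∧ m ≼ b ∧ ∀ c, c ≼ a → c ≼ b → c ≼ m := by
  obtain ⟨x, hx⟩ := exists_Δ_le a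
  obtain ⟨y, hy⟩ := exists_Δ_le b
  have hx' := le_tr (Δ_zpow_le (min_le_left x y)) hx
  have hy' := le_tr (Δ_zpow_le (min_le_right x y)) hy
  generalize min x y = z at hx' hy'
  obtain ⟨m, h0, h1, h2, h3⟩ := exists_meet_aux z hx' hy'
  refine ⟨m, h1, h2, fun c ha hb => ?_⟩
  obtain ⟨w, hw⟩ := exists_Δ_le c
  have hwz := Δ_zpow_le (n := n) (min_le_left z w)
  have hwc := le_tr (Δ_zpow_le (min_le_right z w)) hw
  generalize min z w = w' at hwz hwc
  obtain ⟨m', h0', h1', h2', h3'⟩ := exists_meet_aux w' (le_tr hwz hx') (le_tr hwz hy')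
  exact le_tr (h3' c hwc ha hb) (h3 _ (h3' _ hwz hx' hy') h1' h2')

noncomputable def mt (a b : BraidGroup n) : BraidGroup n := (exists_meet a b).choose

theorem mt_left (a b : BraidGroup n) : mt a b ≼ a := (exists_meet a b).choose_spec.1
theorem mt_right (a b : BraidGroup n) : mt a b ≼ b := (exists_meet a b).choose_spec.2.1
theorem le_mt {a b c : BraidGroup n} (h : c ≼ a) (h' : c ≼ b) : c ≼ mt a b :=
  (exists_meet a b).choose_spec.2.2 c h h'
theorem le_mt_iff {a b c : BraidGroup n} : c ≼ mt a b ↔ c ≼ a ∧ c ≼ b :=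
  ⟨fun h => ⟨le_tr h (mt_left a b), le_tr h (mt_right a b)⟩, fun h => le_mt h.1 h.2⟩
theorem le_mul_mt_iff {a b c g : BraidGroup n} : c ≼ g * mt a b ↔ c ≼ g * a ∧ c ≼ g * b := by
  rw [le_mul_iff, le_mt_iff, ← le_mul_iff, ← le_mul_iff]
theorem le_mt_mul_iff {a b c : BraidGroup n} (z : ℤ) :
    c ≼ mt a b * Δ n ^ z ↔ c ≼ a * Δ n ^ z ∧ c ≼ b * Δ n ^ z := by
  rw [le_mul_Δ_iff, le_mt_iff, ← le_mul_Δ_iff, ← le_mul_Δ_iff]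
theorem mt_eq {a b m : BraidGroup n} (h1 : m ≼ a) (h2 : m ≼ b)
    (h3 : ∀ c, c ≼ a → c ≼ b → c ≼ m) : mt a b = m :=
  le_antisymm' (h3 _ (mt_left a b) (mt_right a b)) (le_mt h1 h2)
theorem mul_mt (g a b : BraidGroup n) : mt (g * a) (g * b) = g * mt a b :=
  le_antisymm' (le_mul_mt_iff.2 ⟨mt_left _ _, mt_right _ _⟩)
    (le_mt ((mul_le_iff g).2 (mt_left _ _)) ((mul_le_iff g).2 (mt_right _ _)))
theorem mt_mul (z : ℤ) (a b : BraidGroup n) :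
    mt (a * Δ n ^ z) (b * Δ n ^ z) = mt a b * Δ n ^ z :=
  le_antisymm' ((le_mt_mul_iff z).2 ⟨mt_left _ _, mt_right _ _⟩)
    (le_mt ((mul_Δ_le_iff z).2 (mt_left _ _)) ((mul_Δ_le_iff z).2 (mt_right _ _)))

/-! ### Normal forms -/

theorem one_le_Δ : 1 ≼ Δ n := one_le_iff.2 pos_Δ

theorem compl_le {a : BraidGroup n} (h : 1 ≼ a) : a⁻¹ * Δ n ≼ Δ n := by
  rw [le_iff]
  have := pos_conj' (one_le_iff.1 h)
  simpa [mul_assoc] using this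

theorem Δ_le_mul {a : BraidGroup n} (h : 1 ≼ a) : Δ n ≼ a * Δ n := by
  rw [le_iff]
  have := pos_conj' (one_le_iff.1 h)
  simpa [mul_assoc] using this

theorem one_le_prod : ∀ {L : List (BraidGroup n)}, (∀ a ∈ L, IsPermBraid a) → 1 ≼ L.prod
  | [], _ => by simpa using le_rfl' 1
  | a :: L, h => by
    rw [List.prod_cons]
    have h1 : 1 ≼ L.prod := one_le_prod fun b hb => h b (List.mem_cons_of_mem _ hb)
    exact le_tr (one_le_iff.2 (h a (by simp)).1) (le_mul_pos a h1)

theorem mt_one {a : BraidGroup n} (h : 1 ≼ a) : mt 1 a = 1 :=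
  mt_eq (le_rfl' _) h fun _ h1 _ => h1

theorem mt_one' {a : BraidGroup n} (h : 1 ≼ a) : mt a 1 = 1 :=
  mt_eq h (le_rfl' _) fun _ _ h1 => h1

theorem exists_σ_le {c : BraidGroup n} (h : 1 ≼ c) (h1 : c ≠ 1) : ∃ i, σ i ≼ c := by
  obtain ⟨i, y, hy, rfl⟩ := pos_cases (one_le_iff.1 h) h1
  exact ⟨i, y, hy, rfl⟩

theorem mt_head : ∀ {L : List (BraidGroup n)}, (∀ a ∈ L, IsPermBraid a) →
    L.IsChain IsLeftWeighted → mt L.prod (Δ n) = L.head?.getD 1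
  | [], _, _ => by simpa using mt_one one_le_Δ
  | a :: L, h, hc => by
    have hL : ∀ a ∈ L, IsPermBraid a := fun b hb => h b (List.mem_cons_of_mem _ hb)
    have ih := mt_head hL hc.tail
    have ha := h a (by simp)
    rw [List.prod_cons]
    simp only [List.head?_cons, Option.getD_some]
    have h1 : a ≼ mt (a * L.prod) (Δ n) := le_mt (le_mul_pos a (one_le_prod hL)) ha.2
    obtain ⟨c, hcp, hce⟩ := h1
    have h2 : c ≼ L.prod := by
      rw [← mul_le_iff a, hce]; exact mt_left _ _
    have h3 : c ≼ a⁻¹ * Δ n := by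
      rw [le_mul_iff, inv_inv, hce]; exact mt_right _ _
    have h4 : c ≼ L.head?.getD 1 := by
      rw [← ih]; exact le_mt h2 (le_tr h3 (compl_le (one_le_iff.2 ha.1)))
    suffices hc1 : c = 1 by rw [← hce, hc1, mul_one]
    by_contra hne
    obtain ⟨i, hi⟩ := exists_σ_le (one_le_iff.2 hcp) hne
    cases L with
    | nil =>
      simp only [List.head?_nil, Option.getD_none] at h4
      exact hne (le_antisymm' h4 (one_le_iff.2 hcp))
    | cons b L =>
      rw [List.isChain_cons_cons] at hc
      exact hc.1 i ⟨le_tr hi h3, le_tr hi h4⟩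

theorem one_le_Δ_pow (m : ℕ) : 1 ≼ Δ n ^ m := by
  have := Δ_zpow_le (n := n) (a := 0) (b := m) (by omega)
  simpa using this

theorem mul_Δ_le_iff_nat (j : ℕ) {a b : BraidGroup n} :
    a * Δ n ^ j ≼ b * Δ n ^ j ↔ a ≼ b := by
  have := mul_Δ_le_iff (n := n) (a := a) (b := b) j
  simpa using this

theorem le_mt_Δ_mul {c : BraidGroup n} {m : ℕ} (h : c ≼ Δ n ^ (m + 1)) :
    c ≼ mt c (Δ n) * Δ n ^ m := by
  rw [← zpow_natCast, le_mt_mul_iff, zpow_natCast]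
  exact ⟨le_mul_pos _ (one_le_Δ_pow m), by rwa [← pow_succ']⟩

theorem mt_take (j : ℕ) : ∀ {L : List (BraidGroup n)}, (∀ a ∈ L, IsPermBraid a) →
    L.IsChain IsLeftWeighted → mt L.prod (Δ n ^ j) = (L.take j).prod := by
  induction j with
  | zero => intro L h _; simpa using mt_one' (one_le_prod h)
  | succ j ih =>
    intro L h hc
    cases L with
    | nil => simpa using mt_one (one_le_Δ_pow (j + 1))
    | cons a L =>
      have hL : ∀ a ∈ L, IsPermBraid a := fun b hb => h b (List.mem_cons_of_mem _ hb)
      have ih := ih hL hc.tail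
      have ha := h a (by simp)
      have hh := mt_head h hc
      simp only [List.head?_cons, Option.getD_some, List.prod_cons] at hh
      rw [List.take_succ_cons, List.prod_cons, List.prod_cons, ← ih]
      apply le_antisymm'
      · rw [le_mul_mt_iff]
        refine ⟨mt_left _ _, ?_⟩
        refine le_tr (le_mt_Δ_mul (mt_right _ _)) ?_
        rw [mul_Δ_le_iff_nat]
        refine le_tr ?_ (show mt (a * L.prod) (Δ n) ≼ a from by rw [hh]; exact le_rfl' _)
        exact le_mt (le_tr (mt_left _ _) (mt_left _ _)) (mt_right _ _)
      · refine le_mt ((mul_le_iff a).2 (mt_left _ _)) ?_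
        refine le_tr ((mul_le_iff a).2 (mt_right _ _)) ?_
        rw [pow_succ', ← zpow_natCast, mul_Δ_le_iff]
        exact ha.2

theorem isChain_of_form {u : ℤ} {L : List (BraidGroup n)} {x : BraidGroup n}
    (h : IsWeightedForm u L x) : L.IsChain IsLeftWeighted := h.2.1

theorem mt_conj (z : ℤ) (a b : BraidGroup n) :
    mt (Δ n ^ z * a * Δ n ^ (-z)) (Δ n ^ z * b * Δ n ^ (-z)) = Δ n ^ z * mt a b * Δ n ^ (-z) := by
  rw [mt_mul, mul_mt]

section
set_option linter.unusedSectionVars false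
variable [hn : Fact (2 ≤ n)]

theorem lenΔ_pos : 0 < len (Δ n) := len_Δ hn.out

theorem Δ_zpow_le_iff {a b : ℤ} : Δ n ^ a ≼ Δ n ^ b ↔ a ≤ b := by
  refine ⟨fun h => ?_, Δ_zpow_le⟩
  have := le_len h
  rw [len_zpow, len_zpow] at this
  exact le_of_mul_le_mul_right this lenΔ_pos

theorem form_inf {u : ℤ} {L : List (BraidGroup n)} {x : BraidGroup n}
    (h : IsWeightedForm u L x) (v : ℤ) : Δ n ^ v ≼ x ↔ v ≤ u := by
  have hp : ∀ a ∈ L, IsPermBraid a := fun a ha => (h.1 a ha).1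
  rw [h.2.2]
  constructor
  · intro h1
    by_contra hlt
    have h2 := le_tr (Δ_zpow_le (n := n) (show u + 1 ≤ v by omega)) h1
    rw [zpow_add, mul_le_iff, zpow_one] at h2
    have h3 := le_mt h2 (le_rfl' _)
    rw [mt_head hp h.2.1] at h3
    cases L with
    | nil =>
      have := le_len h3
      simp only [List.head?_nil, Option.getD_none, len_one] at this
      have := lenΔ_pos (n := n)
      omega
    | cons a L =>
      exact (h.1 a (by simp)).2.2 (le_antisymm' (hp a (by simp)).2 h3)
  · intro h1
    exact le_tr (Δ_zpow_le h1) (le_mul_pos _ (one_le_prod hp))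

theorem form_sup {u : ℤ} {L : List (BraidGroup n)} {x : BraidGroup n}
    (h : IsWeightedForm u L x) (v : ℤ) : x ≼ Δ n ^ v ↔ u + L.length ≤ v := by
  have hp : ∀ a ∈ L, IsPermBraid a := fun a ha => (h.1 a ha).1
  rw [h.2.2]
  constructor
  · intro h1
    by_contra hlt
    rcases List.eq_nil_or_concat L with rfl | ⟨L', b, rfl⟩
    · rw [List.prod_nil, mul_one, Δ_zpow_le_iff] at h1
      simp at hlt; omega
    · rw [List.concat_eq_append] at *
      simp only [List.length_append, List.length_cons, List.length_nil] at hlt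
      have h2 := le_tr h1 (Δ_zpow_le (n := n) (show v ≤ u + L'.length by push_cast at hlt; omega))
      rw [zpow_add, mul_le_iff, zpow_natCast] at h2
      have h3 := le_mt (le_rfl' _) h2
      rw [mt_take _ hp h.2.1] at h3
      simp only [List.take_left, List.prod_append, List.prod_cons, List.prod_nil,
        mul_one] at h3
      have h4 := le_len h3
      rw [len_mul] at h4
      have hb := h.1 b (by simp)
      exact hb.2.1 (eq_one_of_len hb.1.1 (by omega))
  · intro h1
    refine le_tr ?_ (Δ_zpow_le h1)
    rw [zpow_add, mul_le_iff, zpow_natCast]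
    have := mt_take L.length hp h.2.1
    rw [List.take_length] at this
    rw [← this]; exact mt_right _ _

theorem exists_list (N : ℕ) : ∀ {P : BraidGroup n}, 1 ≼ P → ¬ Δ n ≼ P → len P ≤ N →
    ∃ L : List (BraidGroup n), (∀ a ∈ L, IsPermBraid a ∧ a ≠ 1 ∧ a ≠ Δ n) ∧
      L.IsChain IsLeftWeighted ∧ P = L.prod := by
  induction N with
  | zero =>
    intro P h1 h2 h3
    exact ⟨[], by simp, by simp, by simpa using eq_one_of_len (one_le_iff.1 h1) (by simpa using h3)⟩
  | succ N ih =>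
    intro P h1 h2 h3
    by_cases hP : P = 1
    · exact ⟨[], by simp, by simp, by simpa using hP⟩
    have ha1 : 1 ≼ mt P (Δ n) := le_mt h1 one_le_Δ
    have ha2 : mt P (Δ n) ≠ 1 := by
      intro h
      obtain ⟨i, hi⟩ := exists_σ_le h1 hP
      have h4 : σ i ≼ 1 := h ▸ le_mt hi (Δ_dvd i)
      have := le_len h4
      rw [len_σ, len_one] at this
      omega
    obtain ⟨Q, hQ, hPQ⟩ := mt_left P (Δ n)
    have h5 : 0 < len (mt P (Δ n)) := by
      by_contra h
      exact ha2 (eq_one_of_len (one_le_iff.1 ha1) (by omega))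
    have h6 := congrArg len hPQ
    rw [len_mul] at h6
    obtain ⟨L, hL1, hL2, hL3⟩ := ih (P := Q) (one_le_iff.2 hQ) (by
      intro h
      refine h2 (le_tr (Δ_le_mul ha1) ?_)
      have h7 := (mul_le_iff (mt P (Δ n))).2 h
      rwa [hPQ] at h7) (by push_cast at h3; omega)
    refine ⟨mt P (Δ n) :: L, ?_, ?_, ?_⟩
    · intro a ha
      rcases List.mem_cons.1 ha with rfl | ha
      · exact ⟨⟨one_le_iff.1 ha1, mt_right _ _⟩, ha2, fun h => h2 (h ▸ mt_left _ _)⟩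
      · exact hL1 a ha
    · cases L with
      | nil => simp
      | cons b L =>
        rw [List.isChain_cons_cons]
        refine ⟨?_, hL2⟩
        rintro i ⟨hi1, hi2⟩
        have h7 : σ i ≼ Q := by
          rw [hL3, List.prod_cons]
          exact le_tr hi2 (le_mul_pos b (one_le_prod fun c hc =>
            (hL1 c (List.mem_cons_of_mem _ hc)).1))
        have h8 : mt P (Δ n) * σ i ≼ mt P (Δ n) := by
          refine le_mt ?_ ?_
          · conv_rhs => rw [← hPQ]
            exact (mul_le_iff _).2 h7
          · rw [le_mul_iff, inv_inv] at hi1; exact hi1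
        have := le_len h8
        rw [len_mul, len_σ] at this
        omega
    · rw [List.prod_cons, ← hL3, hPQ]

theorem exists_form (x : BraidGroup n) : ∃ u L, IsWeightedForm u L x := by
  obtain ⟨u, hu1, hu2⟩ := Int.exists_greatest_of_bdd (P := fun u : ℤ => Δ n ^ u ≼ x)
    (by
      obtain ⟨z, hz⟩ := exists_le_Δ x
      exact ⟨z, fun w hw => Δ_zpow_le_iff.1 (le_tr hw hz)⟩) (exists_Δ_le x)
  obtain ⟨P, hP, rfl⟩ := hu1
  obtain ⟨L, h1, h2, h3⟩ := exists_list (len P).toNat (one_le_iff.2 hP) (by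
    intro h
    have := hu2 (u + 1) (by rw [zpow_add, mul_le_iff, zpow_one]; exact h)
    omega) (by omega)
  exact ⟨u, L, h1, h2, by rw [h3]⟩

theorem wf_spec (x : BraidGroup n) : IsWeightedForm (wf x).1 (wf x).2 x := by
  obtain ⟨u, L, h⟩ := exists_form x
  exact Classical.epsilon_spec (p := fun p : ℤ × List (BraidGroup n) => IsWeightedForm p.1 p.2 x)
    ⟨(u, L), h⟩

theorem le_binf_iff {v : ℤ} {x : BraidGroup n} : v ≤ binf x ↔ Δ n ^ v ≼ x :=
  (form_inf (wf_spec x) v).symm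

theorem bsup_le_iff {v : ℤ} {x : BraidGroup n} : bsup x ≤ v ↔ x ≼ Δ n ^ v :=
  (form_sup (wf_spec x) v).symm

theorem binf_le (x : BraidGroup n) : Δ n ^ binf x ≼ x := le_binf_iff.1 le_rfl
theorem le_bsup (x : BraidGroup n) : x ≼ Δ n ^ bsup x := bsup_le_iff.1 le_rfl

theorem form_binf {u : ℤ} {L : List (BraidGroup n)} {x : BraidGroup n}
    (h : IsWeightedForm u L x) : binf x = u := by
  have h1 := fun v => (form_inf h v).symm.trans le_binf_iff.symm
  exact le_antisymm ((h1 _).2 le_rfl) ((h1 _).1 le_rfl)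

theorem form_bsup {u : ℤ} {L : List (BraidGroup n)} {x : BraidGroup n}
    (h : IsWeightedForm u L x) : bsup x = u + L.length := by
  have h1 := fun v => (form_sup h v).symm.trans bsup_le_iff.symm
  exact le_antisymm ((h1 _).1 le_rfl) ((h1 _).2 le_rfl)

/-- The cycling conjugator. -/
noncomputable def ι (x : BraidGroup n) : BraidGroup n := mt (x * Δ n ^ (-binf x)) (Δ n)

theorem form_ι {u : ℤ} {L : List (BraidGroup n)} {x : BraidGroup n}
    (h : IsWeightedForm u L x) : ι x = Δ n ^ u * L.head?.getD 1 * Δ n ^ (-u) := by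
  have hp : ∀ a ∈ L, IsPermBraid a := fun a ha => (h.1 a ha).1
  unfold ι
  rw [form_binf h, ← mt_head hp h.2.1, ← mt_conj, h.2.2]
  congr 1
  group

theorem ι_eq (x : BraidGroup n) : ι x = τpow (binf x) (bhead x) := by
  rw [form_ι (wf_spec x), τpow_eq]; rfl

theorem cyc_eq (x : BraidGroup n) : cyc x = (ι x)⁻¹ * x * ι x := by
  rw [cyc, ← ι_eq]

/-- The part of `x` before the tail. -/
noncomputable def dd (x : BraidGroup n) : BraidGroup n := mt x (Δ n ^ (bsup x - 1))

theorem form_dd {u : ℤ} {L : List (BraidGroup n)} {b x : BraidGroup n}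
    (h : IsWeightedForm u (L ++ [b]) x) : dd x = Δ n ^ u * L.prod := by
  have hp : ∀ a ∈ L ++ [b], IsPermBraid a := fun a ha => (h.1 a ha).1
  have h1 := mt_take L.length hp h.2.1
  rw [List.take_left] at h1
  unfold dd
  rw [form_bsup h, ← h1, ← mul_mt, ← h.2.2]
  congr 1
  rw [← zpow_natCast, ← zpow_add]
  congr 1
  simp
  omega

theorem binf_le_bsup (x : BraidGroup n) : binf x ≤ bsup x := by
  unfold bsup; omega

theorem btail_eq {x : BraidGroup n} (h : binf x < bsup x) : btail x = (dd x)⁻¹ * x := by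
  have h1 := wf_spec x
  have h2 : btail x = ((wf x).2.getLast?).getD 1 := rfl
  have h3 : bsup x = binf x + (wf x).2.length := rfl
  rw [h2]
  rw [h3] at h
  generalize (wf x).2 = L at *
  rcases List.eq_nil_or_concat L with rfl | ⟨L', b, rfl⟩
  · simp at h
  · rw [List.concat_eq_append] at *
    rw [form_dd h1]
    have h4 := h1.2.2
    generalize (wf x).1 = u at *
    rw [h4]
    simp [mul_assoc]

theorem btail_eq_one {x : BraidGroup n} (h : binf x = bsup x) : btail x = 1 := by
  have h2 : btail x = ((wf x).2.getLast?).getD 1 := rfl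
  have h3 : bsup x = binf x + (wf x).2.length := rfl
  rw [h2]
  have : (wf x).2 = [] := List.length_eq_zero_iff.1 (by omega)
  rw [this]; rfl

end

/-! ### Cycling and decycling -/

section
set_option linter.unusedSectionVars false
variable [hn : Fact (2 ≤ n)]

theorem mul_le_mul_pos {a b : BraidGroup n} (h : 1 ≼ a) (h' : 1 ≼ b) : 1 ≼ a * b :=
  le_tr h (le_mul_pos a h')

theorem mul_le_Δ {a b : BraidGroup n} {i j : ℤ} (ha : a ≼ Δ n ^ i) (hb : b ≼ Δ n ^ j) :
    a * b ≼ Δ n ^ (i + j) := by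
  refine le_tr ((mul_le_iff a).2 hb) ?_
  rw [zpow_add, mul_Δ_le_iff]
  exact ha

theorem le_mul_Δ {a : BraidGroup n} {j : ℤ} (hj : 0 ≤ j) : a ≼ a * Δ n ^ j := by
  apply le_mul_pos
  simpa using Δ_zpow_le (n := n) hj

theorem one_le_ι (x : BraidGroup n) : 1 ≼ ι x := by
  refine le_mt ?_ one_le_Δ
  rw [le_mul_Δ_iff, neg_neg, one_mul]
  exact binf_le x

theorem ι_le_Δ (x : BraidGroup n) : ι x ≼ Δ n := mt_right _ _

theorem ι_le (x : BraidGroup n) : ι x ≼ x * Δ n ^ (-binf x) := mt_left _ _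

theorem ι_mul_le (x : BraidGroup n) : ι x * Δ n ^ binf x ≼ x := by
  have := ι_le x
  rwa [le_mul_Δ_iff, neg_neg] at this

theorem le_ι_mul {x c : BraidGroup n} {z : ℤ} (h1 : c ≼ x * Δ n ^ (z - binf x))
    (h2 : c ≼ Δ n ^ (z + 1)) : c ≼ ι x * Δ n ^ z := by
  unfold ι
  rw [le_mt_mul_iff, mul_assoc, ← zpow_add, ← zpow_one_add]
  exact ⟨by rwa [neg_add_eq_sub], by rwa [add_comm]⟩

theorem binf_cyc (x : BraidGroup n) : binf x ≤ binf (cyc x) := by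
  rw [le_binf_iff, cyc_eq, mul_assoc, le_mul_iff, inv_inv]
  exact le_tr (ι_mul_le x) (le_mul_pos _ (one_le_ι x))

theorem eq_Δ {x : BraidGroup n} (h : binf x = bsup x) : x = Δ n ^ binf x :=
  le_antisymm' (h ▸ le_bsup x) (binf_le x)

theorem ι_ne {x : BraidGroup n} : ι x ≠ Δ n := by
  intro h
  have h1 := ι_mul_le x
  rw [h, ← zpow_one_add, ← le_binf_iff] at h1
  omega

theorem bsup_cyc (x : BraidGroup n) : bsup (cyc x) ≤ bsup x := by
  rcases (binf_le_bsup x).eq_or_lt with h | h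
  · have h1 := eq_Δ h
    have h2 : ι x = 1 := by
      unfold ι
      have : x * Δ n ^ (-binf x) = 1 := by
        nth_rw 1 [h1]; simp
      rw [this, mt_one one_le_Δ]
    rw [cyc_eq, h2]; simp
  · rw [bsup_le_iff, cyc_eq]
    have h1 : x ≼ ι x * Δ n ^ (bsup x - 1) := by
      refine le_ι_mul (le_mul_Δ (by omega)) ?_
      rw [sub_add_cancel]; exact le_bsup x
    rw [le_mul_iff] at h1
    have h2 := mul_le_Δ (j := 1) h1 (by simpa using ι_le_Δ x)
    rwa [sub_add_cancel] at h2

theorem le_dd_mul {x c : BraidGroup n} {z : ℤ} (h1 : c ≼ x * Δ n ^ z)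
    (h2 : c ≼ Δ n ^ (bsup x - 1 + z)) : c ≼ dd x * Δ n ^ z := by
  unfold dd
  rw [le_mt_mul_iff, ← zpow_add]
  exact ⟨h1, h2⟩

theorem decyc_of_eq {x : BraidGroup n} (h : binf x = bsup x) : decyc x = x := by
  rw [decyc, btail_eq_one h]; simp

theorem bsup_decyc (x : BraidGroup n) : bsup (decyc x) ≤ bsup x := by
  rcases (binf_le_bsup x).eq_or_lt with h | h
  · rw [decyc_of_eq h]
  · have h1 := btail_eq h
    rw [bsup_le_iff]
    have h2 : decyc x = btail x * dd x := by
      rw [decyc, h1]; simp [mul_assoc]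
    have h3 : x ≼ dd x * Δ n ^ (1 : ℤ) := by
      refine le_dd_mul (le_mul_Δ (by omega)) ?_
      rw [sub_add_cancel]; exact le_bsup x
    rw [le_mul_iff, ← h1] at h3
    have h4 : dd x ≼ Δ n ^ (bsup x - 1) := mt_right _ _
    have h5 := mul_le_Δ h3 h4
    rw [h2]
    rwa [add_sub_cancel] at h5

theorem exists_conjugator {y z : BraidGroup n} (h : IsConj y z) :
    ∃ (α : BraidGroup n) (r : ℤ), 1 ≼ α ∧ α ≼ Δ n ^ r ∧ z = α⁻¹ * y * α := by
  obtain ⟨c, rfl⟩ := isConj_iff.1 h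
  obtain ⟨w, hw⟩ := exists_Δ_le c⁻¹
  have hw2 := le_tr (Δ_zpow_le (n := n) (show 2 * (w / 2) ≤ w by omega)) hw
  have hcomm := Δ_even_comm (n := n) (z := 2 * (w / 2)) (by simp)
  generalize 2 * (w / 2) = v at *
  obtain ⟨r, hr⟩ := exists_le_Δ ((Δ n ^ v)⁻¹ * c⁻¹)
  refine ⟨_, r, ?_, hr, ?_⟩
  · rw [le_mul_iff, inv_inv, mul_one]; exact hw2
  · have h1 : Δ n ^ v * y * (Δ n ^ v)⁻¹ = y := by rw [hcomm y]; simp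
    calc c * y * c⁻¹ = c * (Δ n ^ v * y * (Δ n ^ v)⁻¹) * c⁻¹ := by rw [h1]
      _ = _ := by simp only [mul_inv_rev, inv_inv, mul_assoc]

theorem binf_step {y α : BraidGroup n} {u r : ℤ} (hu : binf y = u) (h1 : 1 ≼ α)
    (h2 : α ≼ Δ n ^ r) (h3 : Δ n ^ (u + 1) ≼ α⁻¹ * y * α) :
    ∃ α', 1 ≼ α' ∧ α' ≼ Δ n ^ r ∧ Δ n ^ (u + 1) ≼ α'⁻¹ * cyc y * α' ∧ len α + 1 ≤ len α' := by
  subst hu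
  refine ⟨(ι y)⁻¹ * (α * Δ n), ?_, ?_, ?_, ?_⟩
  · rw [le_mul_iff, inv_inv, mul_one]
    exact le_tr (ι_le_Δ y) (Δ_le_mul h1)
  · rw [← le_mul_iff]
    apply le_ι_mul
    · rw [sub_eq_add_neg, zpow_add, ← mul_assoc, le_mul_Δ_iff, neg_neg, mul_assoc,
        ← zpow_one_add, add_comm]
      rw [mul_assoc, le_mul_iff, inv_inv] at h3
      exact le_tr h3 ((mul_le_iff y).2 h2)
    · exact mul_le_Δ h2 (by simpa using le_rfl' _)
  · have h4 : ((ι y)⁻¹ * (α * Δ n))⁻¹ * cyc y * ((ι y)⁻¹ * (α * Δ n)) =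
        (Δ n)⁻¹ * (α⁻¹ * y * α) * Δ n := by
      rw [cyc_eq]; group
    have h5 := (mul_le_iff (Δ n)⁻¹).2 ((mul_Δ_le_iff 1).2 h3)
    rw [h4]
    convert h5 using 1
    · group
    · group
  · rw [len_mul, len_mul, len_inv]
    have h4 := le_len (ι_le_Δ y)
    have h5 : ¬ len (Δ n) ≤ len (ι y) := fun h => ι_ne (le_eq_of_len (ι_le_Δ y) h)
    omega

theorem binf_max {y z : BraidGroup n} {u : ℤ} (hu : ∀ i, binf (cyc^[i] y) = u)
    (hc : IsConj y z) : binf z ≤ u := by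
  by_contra hlt
  obtain ⟨α, r, h1, h2, rfl⟩ := exists_conjugator hc
  have h3 := le_binf_iff.1 (show u + 1 ≤ binf (α⁻¹ * y * α) by omega)
  have key : ∀ i : ℕ, ∃ α' : BraidGroup n, 1 ≼ α' ∧ α' ≼ Δ n ^ r ∧
      Δ n ^ (u + 1) ≼ α'⁻¹ * cyc^[i] y * α' ∧ (i : ℤ) ≤ len α' := by
    intro i
    induction i with
    | zero => exact ⟨α, h1, h2, h3, by simpa using len_nonneg (one_le_iff.1 h1)⟩
    | succ i ih =>
      obtain ⟨β, k1, k2, k3, k4⟩ := ih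
      obtain ⟨γ, l1, l2, l3, l4⟩ := binf_step (hu i) k1 k2 k3
      refine ⟨γ, l1, l2, ?_, by push_cast; omega⟩
      rw [Function.iterate_succ_apply']; exact l3
  obtain ⟨β, k1, k2, k3, k4⟩ := key ((len (Δ n ^ r)).toNat + 1)
  have := le_len k2
  push_cast at k4
  omega

theorem bsup_step {y α : BraidGroup n} {s r : ℤ} (hs : bsup y = s) (h1 : 1 ≼ α)
    (h2 : α ≼ Δ n ^ r) (h3 : α⁻¹ * y * α ≼ Δ n ^ (s - 1)) :
    ∃ α', 1 ≼ α' ∧ α' ≼ Δ n ^ r ∧ α'⁻¹ * decyc y * α' ≼ Δ n ^ (s - 1) ∧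
      len α + 1 ≤ len α' := by
  subst hs
  have hlt : binf y < bsup y := by
    rcases (binf_le_bsup y).eq_or_lt with h | h
    · have h4 := le_len h3
      have h5 := congrArg len (eq_Δ h)
      simp only [len_mul, len_inv, len_zpow] at h4 h5
      rw [h5, h] at h4
      have := lenΔ_pos (n := n)
      nlinarith
    · exact h
  have hT := btail_eq hlt
  have hTpos : 1 ≼ btail y := by
    rw [hT, le_mul_iff, inv_inv, mul_one]; exact mt_left _ _
  refine ⟨btail y * α, mul_le_mul_pos hTpos h1, ?_, ?_, ?_⟩
  · rw [hT, mul_assoc, ← le_mul_iff]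
    refine le_dd_mul ((mul_le_iff y).2 h2) ?_
    rw [mul_assoc, ← mul_le_iff α, mul_inv_cancel_left] at h3
    refine le_tr h3 ?_
    rw [add_comm]
    exact mul_le_Δ h2 (le_rfl' _)
  · convert h3 using 1
    rw [decyc]; group
  · rw [len_mul]
    have h4 : ¬ len (btail y) ≤ 0 := by
      intro h
      have h5 := eq_one_of_len (one_le_iff.1 hTpos) h
      rw [hT, inv_mul_eq_one] at h5
      have h6 : dd y ≼ Δ n ^ (bsup y - 1) := mt_right _ _
      rw [h5, ← bsup_le_iff] at h6
      omega
    omega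

theorem bsup_min {y z : BraidGroup n} {s : ℤ} (hs : ∀ i, bsup (decyc^[i] y) = s)
    (hc : IsConj y z) : s ≤ bsup z := by
  by_contra hlt
  obtain ⟨α, r, h1, h2, rfl⟩ := exists_conjugator hc
  have h3 := bsup_le_iff.1 (show bsup (α⁻¹ * y * α) ≤ s - 1 by omega)
  have key : ∀ i : ℕ, ∃ α' : BraidGroup n, 1 ≼ α' ∧ α' ≼ Δ n ^ r ∧
      α'⁻¹ * decyc^[i] y * α' ≼ Δ n ^ (s - 1) ∧ (i : ℤ) ≤ len α' := by
    intro i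
    induction i with
    | zero => exact ⟨α, h1, h2, h3, by simpa using len_nonneg (one_le_iff.1 h1)⟩
    | succ i ih =>
      obtain ⟨β, k1, k2, k3, k4⟩ := ih
      obtain ⟨γ, l1, l2, l3, l4⟩ := bsup_step (hs i) k1 k2 k3
      refine ⟨γ, l1, l2, ?_, by push_cast; omega⟩
      rw [Function.iterate_succ_apply']; exact l3
  obtain ⟨β, k1, k2, k3, k4⟩ := key ((len (Δ n ^ r)).toNat + 1)
  have := le_len k2
  push_cast at k4
  omega

theorem const_of_periodic {A : Type*} {f : A → A} {φ : A → ℤ} (h : ∀ a, φ a ≤ φ (f a))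
    {y : A} {M : ℕ} (hM : 0 < M) (hy : f^[M] y = y) (i : ℕ) : φ (f^[i] y) = φ y := by
  have hm : Monotone fun i : ℕ => φ (f^[i] y) :=
    monotone_nat_of_le_succ fun i => by
      rw [Function.iterate_succ_apply']; exact h _
  apply le_antisymm
  · have h1 := hm (show i ≤ M * i from Nat.le_mul_of_pos_left i hM)
    simp only at h1
    rwa [Function.iterate_mul, Function.iterate_fixed hy] at h1
  · exact hm (Nat.zero_le i)

theorem RSSS_sub_USS (x : BraidGroup n) : RSSS x ⊆ USS x := by
  rintro y ⟨hc, ⟨M, hM, hy⟩, ⟨N, hN, hy'⟩⟩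
  have h1 := const_of_periodic binf_cyc hM hy
  have h2 := const_of_periodic (f := decyc) (φ := fun x : BraidGroup n => - bsup x)
    (fun a => neg_le_neg (bsup_decyc a)) hN hy'
  refine ⟨⟨⟨hc, fun z hz => binf_max h1 (hc.symm.trans hz)⟩, fun z hz =>
    bsup_min (fun i => neg_injective (h2 i)) (hc.symm.trans hz)⟩, M, hM, hy⟩

end

/-! ### Iterated cycling and transport -/

section
set_option linter.unusedSectionVars false
variable [hn : Fact (2 ≤ n)]

/-- The product of the first `m` cycling conjugators. -/
noncomputable def Z : ℕ → BraidGroup n → BraidGroup n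
  | 0, _ => 1
  | m + 1, y => ι y * Z m (cyc y)

theorem Z_add (a b : ℕ) (y : BraidGroup n) : Z (a + b) y = Z a y * Z b (cyc^[a] y) := by
  induction a generalizing y with
  | zero => simp [Z]
  | succ a ih =>
    rw [show a + 1 + b = (a + b) + 1 by omega, Z, Z, ih, mul_assoc, Function.iterate_succ_apply]

theorem Z_succ' (a : ℕ) (y : BraidGroup n) : Z (a + 1) y = Z a y * ι (cyc^[a] y) := by
  rw [Z_add]; simp [Z]

theorem one_le_Z (m : ℕ) (y : BraidGroup n) : 1 ≼ Z m y := by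
  induction m generalizing y with
  | zero => exact le_rfl' _
  | succ m ih => exact mul_le_mul_pos (one_le_ι y) (ih _)

theorem Z_le {a b : ℕ} (h : a ≤ b) (y : BraidGroup n) : Z a y ≼ Z b y := by
  obtain ⟨c, rfl⟩ := Nat.exists_eq_add_of_le h
  rw [Z_add]; exact le_mul_pos _ (one_le_Z _ _)

theorem Z_le_Δ (m : ℕ) (y : BraidGroup n) : Z m y ≼ Δ n ^ (m : ℤ) := by
  induction m generalizing y with
  | zero => simpa [Z] using le_rfl' (1 : BraidGroup n)
  | succ m ih =>
    rw [Nat.cast_succ, add_comm (m : ℤ)]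
    exact mul_le_Δ (i := 1) (by simpa using ι_le_Δ y) (ih _)

theorem cyc_iterate (m : ℕ) (y : BraidGroup n) : cyc^[m] y = (Z m y)⁻¹ * y * Z m y := by
  induction m generalizing y with
  | zero => simp [Z]
  | succ m ih => rw [Function.iterate_succ_apply, ih, Z, cyc_eq]; group

theorem cyc_conj (m : ℕ) (y : BraidGroup n) : IsConj y (cyc^[m] y) := by
  rw [cyc_iterate, isConj_iff]
  exact ⟨(Z m y)⁻¹, by simp⟩

theorem len_cyc (m : ℕ) (y : BraidGroup n) : len (cyc^[m] y) = len y := by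
  rw [cyc_iterate, len_mul, len_mul, len_inv]; ring

theorem transport {x y α : BraidGroup n} {r : ℤ} (hu : binf x = binf y) (h1 : 1 ≼ α)
    (h2 : α ≼ Δ n ^ r) (hy : y = α⁻¹ * x * α) :
    1 ≼ (ι x)⁻¹ * (α * ι y) ∧ (ι x)⁻¹ * (α * ι y) ≼ Δ n ^ r := by
  have h3 : α * y = x * α := by rw [hy]; group
  constructor
  · rw [le_mul_iff, inv_inv, mul_one]
    change _ ≼ α * mt _ _
    rw [le_mul_mt_iff]
    constructor
    · refine le_tr (ι_le x) ?_
      rw [← mul_assoc, h3, ← hu, mul_Δ_le_iff]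
      exact le_mul_pos _ h1
    · exact le_tr (ι_le_Δ x) (Δ_le_mul h1)
  · rw [← le_mul_iff]
    apply le_ι_mul
    · refine le_tr ((mul_le_iff α).2 (ι_le y)) ?_
      rw [← mul_assoc, h3, sub_eq_add_neg, zpow_add, ← hu, ← mul_assoc, mul_Δ_le_iff, mul_le_iff]
      exact h2
    · exact mul_le_Δ h2 (by simpa using ι_le_Δ y)

theorem transport_iter {x y : BraidGroup n} {u : ℤ} (hx : ∀ i, binf (cyc^[i] x) = u)
    (hy : ∀ i, binf (cyc^[i] y) = u) (hc : IsConj x y) :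
    ∃ C : ℤ, ∀ m, len (Z m y) ≤ len (Z m x) + C := by
  obtain ⟨α, r, h1, h2, h3⟩ := exists_conjugator hc
  have key : ∀ m : ℕ, 1 ≼ (Z m x)⁻¹ * (α * Z m y) ∧ (Z m x)⁻¹ * (α * Z m y) ≼ Δ n ^ r := by
    intro m
    induction m with
    | zero => simpa [Z] using ⟨h1, h2⟩
    | succ m ih =>
      have h4 := transport (x := cyc^[m] x) (y := cyc^[m] y) ((hx m).trans (hy m).symm)
        ih.1 ih.2 (by rw [cyc_iterate, cyc_iterate, h3]; group)
      rw [Z_succ', Z_succ']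
      convert h4 using 2 <;> group
  refine ⟨len (Δ n ^ r), fun m => ?_⟩
  have h4 := le_len (key m).2
  rw [len_mul, len_mul, len_inv] at h4
  have := len_nonneg (one_le_iff.1 h1)
  omega

theorem mt_le_Z {y : BraidGroup n} {u : ℤ} (hy : ∀ i, binf (cyc^[i] y) = u) (i : ℕ) :
    mt (y * Δ n ^ (-u)) (Δ n ^ (i : ℤ)) ≼ Z i y := by
  induction i with
  | zero => simpa [Z] using mt_right (y * Δ n ^ (-u)) 1
  | succ i ih =>
    rw [Z_succ']
    unfold ι
    rw [hy i, le_mul_mt_iff]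
    constructor
    · have : Z i y * (cyc^[i] y * Δ n ^ (-u)) = y * Z i y * Δ n ^ (-u) := by
        rw [cyc_iterate]; group
      rw [this]
      refine le_tr (mt_left _ _) ?_
      rw [mul_Δ_le_iff]
      exact le_mul_pos _ (one_le_Z _ _)
    · have h1 := (mul_Δ_le_iff 1).2 ih
      conv_rhs => rw [← zpow_one (Δ n)]
      refine le_tr ?_ h1
      rw [le_mt_mul_iff]
      refine ⟨le_tr (mt_left _ _) (le_mul_Δ (by norm_num)), ?_⟩
      rw [← zpow_add]
      exact mt_right _ _

theorem le_Z {y : BraidGroup n} {u : ℤ} (hy : ∀ i, binf (cyc^[i] y) = u) {k : ℕ}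
    (hk : bsup y ≤ u + k) : y * Δ n ^ (-u) ≼ Z k y := by
  refine le_tr (le_mt (le_rfl' _) ?_) (mt_le_Z hy k)
  rw [bsup_le_iff, add_comm, zpow_add, le_mul_Δ_iff] at hk
  exact hk

theorem bsup_cyc_iter (y : BraidGroup n) (i : ℕ) : bsup (cyc^[i] y) ≤ bsup y := by
  induction i with
  | zero => exact le_rfl
  | succ i ih => rw [Function.iterate_succ_apply']; exact (bsup_cyc _).trans ih

theorem len_Z_ge {y : BraidGroup n} {u : ℤ} {k : ℕ} (j : ℕ) 
    (hy : ∀ i, binf (cyc^[i] y) = u) (hk : bsup y ≤ u + k) :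
    j * (len y - u * len (Δ n)) ≤ len (Z (j * k) y) := by
  induction j generalizing y with
  | zero => simp [Z, len_one]
  | succ j ih =>
    rw [show (j + 1) * k = k + j * k by ring, Z_add, len_mul]
    have h1 := le_len (le_Z hy hk)
    rw [len_mul, len_zpow] at h1
    have h2 := ih (y := cyc^[k] y) (fun i => by
      rw [← Function.iterate_add_apply]; exact hy _) ((bsup_cyc_iter y k).trans hk)
    rw [len_cyc] at h2
    push_cast
    linarith

theorem Z_eq {x y : BraidGroup n} {u : ℤ} {k M : ℕ} (hx : ∀ i, binf (cyc^[i] x) = u)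
    (hxZ : ∀ j : ℕ, len (Z (j * k) x) = j * (len x - u * len (Δ n)))
    (hy : ∀ i, binf (cyc^[i] y) = u) (hk : bsup y ≤ u + k) (hc : IsConj x y)
    (hM : 0 < M) (hyM : cyc^[M] y = y) : Z k y = y * Δ n ^ (-u) := by
  obtain ⟨C, hC⟩ := transport_iter hx hy hc
  have hl : len x = len y := by
    obtain ⟨c, rfl⟩ := isConj_iff.1 hc
    rw [len_mul, len_mul, len_inv]; ring
  symm
  apply le_eq_of_len (le_Z hy hk)
  rw [len_mul, len_zpow]
  have hfix : cyc^[M * k] y = y := by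
    rw [Function.iterate_mul]
    exact Function.iterate_fixed hyM k
  have hpow : ∀ N : ℕ, len (Z (N * (M * k)) y) = N * len (Z (M * k) y) := by
    intro N
    induction N with
    | zero => simp [Z, len_one]
    | succ N ih =>
      rw [show (N + 1) * (M * k) = M * k + N * (M * k) by ring, Z_add, len_mul, hfix, ih]
      push_cast; ring
  have hle : len (Z (M * k) y) ≤ M * (len y - u * len (Δ n)) := by
    by_contra hlt
    have h1 := hC ((C.toNat + 1) * (M * k))
    rw [hpow, ← mul_assoc, hxZ, hl] at h1
    push_cast at h1
    have h2 : ((C.toNat : ℤ) + 1) * (M * (len y - u * len (Δ n)) + 1)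
      ≤ ((C.toNat : ℤ) + 1) * len (Z (M * k) y) :=
      mul_le_mul_of_nonneg_left (by omega) (by omega)
    have h3 := Int.self_le_toNat C
    nlinarith
  obtain ⟨M', rfl⟩ : ∃ M', M = M' + 1 := ⟨M - 1, by omega⟩
  rw [show (M' + 1) * k = k + M' * k by ring, Z_add, len_mul] at hle
  have h2 := len_Z_ge (y := cyc^[k] y) M' (fun i => by
      rw [← Function.iterate_add_apply]; exact hy _) ((bsup_cyc_iter y k).trans hk)
  rw [len_cyc] at h2
  push_cast at hle
  linarith

end

/-! ### Cyclically weighted braids -/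

section
set_option linter.unusedSectionVars false
variable [hn : Fact (2 ≤ n)]

/-- Conjugation by `Δ^u`. -/
def tw (u : ℤ) (g : BraidGroup n) : BraidGroup n := Δ n ^ u * g * Δ n ^ (-u)

theorem tw_mul (u : ℤ) (a b : BraidGroup n) : tw u (a * b) = tw u a * tw u b := by
  unfold tw; group

theorem tw_one (u : ℤ) : tw u (1 : BraidGroup n) = 1 := by unfold tw; group

theorem tw_Δ (u : ℤ) : tw u (Δ n) = Δ n := by unfold tw; group

theorem tw_inj (u : ℤ) {a b : BraidGroup n} (h : tw u a = tw u b) : a = b := by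
  unfold tw at h; simpa using h

theorem tw_le (u : ℤ) {a b : BraidGroup n} (h : a ≼ b) : tw u a ≼ tw u b := by
  unfold tw
  rwa [mul_Δ_le_iff, mul_le_iff]

theorem tw_perm (u : ℤ) {a : BraidGroup n} (h : IsPermBraid a ∧ a ≠ 1 ∧ a ≠ Δ n) :
    IsPermBraid (tw u a) ∧ tw u a ≠ 1 ∧ tw u a ≠ Δ n := by
  refine ⟨⟨?_, ?_⟩, ?_, ?_⟩
  · have := tw_le u (one_le_iff.2 h.1.1)
    rwa [tw_one, one_le_iff] at this
  · have := tw_le u h.1.2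
    rwa [tw_Δ] at this
  · intro h1; exact h.2.1 (tw_inj u (h1.trans (tw_one u).symm))
  · intro h1; exact h.2.2 (tw_inj u (h1.trans (tw_Δ u).symm))

theorem lw_iff {a b : BraidGroup n} (ha : a ≼ Δ n) (hb : 1 ≼ b) :
    IsLeftWeighted a b ↔ mt (a⁻¹ * Δ n) b = 1 := by
  have h1 : 1 ≼ a⁻¹ * Δ n := by rwa [le_mul_iff, inv_inv, mul_one]
  constructor
  · intro h
    by_contra hne
    obtain ⟨i, hi⟩ := exists_σ_le (le_mt h1 hb) hne
    exact h i (le_mt_iff.1 hi)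
  · intro h i hi
    have h2 := le_len (le_mt hi.1 hi.2)
    rw [h, len_one, len_σ] at h2
    omega

theorem lw_tw (u : ℤ) {a b : BraidGroup n} (ha : a ≼ Δ n) (hb : 1 ≼ b)
    (h : IsLeftWeighted a b) : IsLeftWeighted (tw u a) (tw u b) := by
  rw [lw_iff ha hb] at h
  have h1 := tw_le u ha
  have h2 := tw_le u hb
  rw [tw_Δ] at h1
  rw [tw_one] at h2
  rw [lw_iff h1 h2]
  have h3 : (tw u a)⁻¹ * Δ n = tw u (a⁻¹ * Δ n) := by unfold tw; group
  rw [h3]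
  unfold tw
  rw [mt_conj, h]; group

/-- A weighted form that is cyclically weighted. -/
def Rig (u : ℤ) (L : List (BraidGroup n)) (x : BraidGroup n) : Prop :=
  IsWeightedForm u L x ∧ ∀ a ∈ L.head?, (L ++ [tw u a]).IsChain IsLeftWeighted

theorem rig_rot {u : ℤ} {a x : BraidGroup n} {L : List (BraidGroup n)} (h : Rig u (a :: L) x) :
    Rig u (L ++ [tw u a]) (cyc x) ∧ ι x = tw u a := by
  have hι : ι x = tw u a := form_ι h.1
  have hch : (a :: (L ++ [tw u a])).IsChain IsLeftWeighted := h.2 a (by simp)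
  have hP : ∀ b ∈ L ++ [tw u a], IsPermBraid b ∧ b ≠ 1 ∧ b ≠ Δ n := by
    intro b hb
    rcases List.mem_append.1 hb with hb | hb
    · exact h.1.1 b (List.mem_cons_of_mem _ hb)
    · rw [List.mem_singleton.1 hb]; exact tw_perm u (h.1.1 a (by simp))
  refine ⟨⟨⟨hP, hch.tail, ?_⟩, ?_⟩, hι⟩
  · rw [cyc_eq, hι, h.1.2.2]
    simp only [List.prod_cons, List.prod_append, List.prod_nil, tw]
    group
  · intro b hb
    rw [List.isChain_append]
    refine ⟨hch.tail, by simp, ?_⟩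
    intro c hc d hd
    simp only [List.getLast?_append, List.getLast?_singleton, Option.some_or, Option.mem_def,
      Option.some.injEq, List.head?_cons] at hc hd
    subst hc
    subst hd
    rw [List.isChain_cons] at hch
    exact lw_tw u (h.1.1 a (by simp)).1.2 (one_le_iff.2 (hP b (List.mem_of_mem_head? hb)).1.1)
      (hch.1 b hb)

theorem rig_iter {u : ℤ} (A : List (BraidGroup n)) : ∀ {x : BraidGroup n} {B : List (BraidGroup n)},
    Rig u (A ++ B) x → Rig u (B ++ A.map (tw u)) (cyc^[A.length] x) ∧
      Z A.length x = tw u A.prod := by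
  induction A with
  | nil => intro x B h; simpa [Z, tw_one] using h
  | cons a A ih =>
    intro x B h
    obtain ⟨h1, h2⟩ := rig_rot h
    obtain ⟨h3, h4⟩ := ih (x := cyc x) (B := B ++ [tw u a]) (by rwa [← List.append_assoc])
    constructor
    · simpa using h3
    · rw [List.length_cons, Z, h4, h2, List.prod_cons, tw_mul]

theorem rig_binf {u : ℤ} {L : List (BraidGroup n)} {x : BraidGroup n} (h : Rig u L x)
    (hL : L ≠ []) (i : ℕ) : binf (cyc^[i] x) = u := by
  induction i generalizing x L with
  | zero => exact form_binf h.1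
  | succ i ih =>
    cases L with
    | nil => exact absurd rfl hL
    | cons a L =>
      rw [Function.iterate_succ_apply]
      exact ih (rig_rot h).1 (by simp)

theorem rig_len {u : ℤ} {L : List (BraidGroup n)} {x : BraidGroup n} (h : Rig u L x) (j : ℕ) :
    len (Z (j * L.length) x) = j * (len x - u * len (Δ n)) := by
  induction j generalizing x L with
  | zero => simp [Z, len_one]
  | succ j ih =>
    obtain ⟨h1, h2⟩ := rig_iter L (x := x) (B := []) (by simpa using h)
    have h3 := ih h1
    rw [show (j + 1) * L.length = L.length + j * L.length by ring, Z_add, len_mul, h2]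
    simp only [List.nil_append, List.length_map] at h3
    rw [h3, len_cyc]
    have h4 := congrArg len h.1.2.2
    rw [len_mul, len_zpow] at h4
    unfold tw
    rw [len_mul, len_mul, len_zpow, len_zpow]
    push_cast
    linarith

theorem rig_of_CW {x : BraidGroup n} (h : IsCW x) : Rig (binf x) (wf x).2 x := by
  have h1 := wf_spec x
  refine ⟨h1, fun a ha => ?_⟩
  rw [List.isChain_append]
  refine ⟨h1.2.1, by simp, ?_⟩
  intro b hb c hc
  unfold IsCW btail bhead at h
  rw [Option.mem_def] at ha hb
  rw [ha, hb, τpow_eq] at h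
  simp only [List.head?_cons, Option.mem_def, Option.some.injEq] at hc
  subst hc
  exact h

theorem USS_sub_RSSS {x : BraidGroup n} (h : IsCW x) : USS x ⊆ RSSS x := by
  rintro y ⟨⟨⟨hc, hinf⟩, hsup⟩, M, hM, hyM⟩
  refine ⟨hc, ⟨M, hM, hyM⟩, ?_⟩
  have hxy1 := hinf x (IsConj.refl x)
  have hxy2 := hsup x (IsConj.refl x)
  by_cases hk : binf y = bsup y
  · exact ⟨1, one_pos, decyc_of_eq hk⟩
  have hk' := lt_of_le_of_ne (binf_le_bsup y) hk
  have hR := rig_of_CW h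
  have hbs : bsup x = binf x + (wf x).2.length := rfl
  have hL : (wf x).2 ≠ [] := by
    intro h0
    rw [h0] at hbs
    simp only [List.length_nil] at hbs
    omega
  have hxi := rig_binf hR hL
  have hxZ := rig_len hR
  generalize (wf x).2.length = k at *
  have hyinf : binf y = binf x := le_antisymm (binf_max hxi hc) hxy1
  generalize binf x = u at *
  have hyi : ∀ i, binf (cyc^[i] y) = u := fun i =>
    (const_of_periodic binf_cyc hM hyM i).trans hyinf
  obtain ⟨l, hl⟩ : ∃ l : ℕ, bsup y = u + (l + 1) := ⟨(bsup y - u - 1).toNat, by omega⟩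
  have hys : ∀ i, bsup (cyc^[i] y) = u + (l + 1) := fun i =>
    (le_antisymm (bsup_cyc_iter y i) (hsup _ (hc.trans (cyc_conj i y)))).trans hl
  have hinf' : ∀ i j, binf (cyc^[j] (cyc^[i] y)) = u := fun i j => by
    rw [← Function.iterate_add_apply]; exact hyi _
  have hZk : ∀ i, Z k (cyc^[i] y) = cyc^[i] y * Δ n ^ (-u) := fun i =>
    Z_eq hxi hxZ (hinf' i) (by rw [hys i]; omega) (hc.trans (cyc_conj i y)) hM (by
      rw [← Function.iterate_add_apply, add_comm, Function.iterate_add_apply, hyM])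
  have hlk : l + 1 ≤ k := by omega
  have hZ : ∀ i, Z (l + 1) (cyc^[i] y) = cyc^[i] y * Δ n ^ (-u) := fun i =>
    le_antisymm' (hZk i ▸ Z_le hlk _) (le_Z (hinf' i) (by rw [hys i]; push_cast; exact le_rfl))
  have hdc : ∀ i, decyc (cyc (cyc^[i] y)) = cyc^[i] y := by
    intro i
    have h1 := hZ i
    rw [Z] at h1
    have h2 := hZ (i + 1)
    have h3 := mt_le_Z (hinf' (i + 1)) l
    have h4 := hys (i + 1)
    have h5 := hyi (i + 1)
    rw [Function.iterate_succ_apply'] at h2 h3 h4 h5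
    generalize cyc^[i] y = w at *
    have h6 : Z l (cyc w) = mt (cyc w * Δ n ^ (-u)) (Δ n ^ (l : ℤ)) :=
      le_antisymm' (le_mt (h2 ▸ Z_le (Nat.le_succ l) _) (Z_le_Δ _ _)) h3
    have h7 : dd (cyc w) = Z l (cyc w) * Δ n ^ u := by
      rw [h6, ← mt_mul, dd, h4]
      congr 1
      · group
      · rw [← zpow_add]; congr 1; ring
    have h8 : dd (cyc w) = (ι w)⁻¹ * w := by
      rw [h7]
      have : Z l (cyc w) = (ι w)⁻¹ * (w * Δ n ^ (-u)) := by rw [← h1]; group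
      rw [this]; group
    have h9 : btail (cyc w) = ι w := by
      rw [btail_eq (by omega), h8, cyc_eq]; group
    rw [decyc, h9, cyc_eq]; group
  refine ⟨M, hM, ?_⟩
  have hdd : ∀ i, decyc^[i] (cyc^[i] y) = y := by
    intro i
    induction i with
    | zero => rfl
    | succ i ih =>
      rw [Function.iterate_succ_apply, Function.iterate_succ_apply' cyc, hdc, ih]
  have := hdd M
  rwa [hyM] at this

end

theorem subsingleton_of_lt (h : ¬ 2 ≤ n) : Subsingleton (BraidGroup n) := by
  have : IsEmpty (Fin (n - 1)) := by
    have : n - 1 = 0 := by omega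
    rw [this]; infer_instance
  have : Subsingleton (FreeGroup (Fin (n - 1))) := inferInstance
  exact (PresentedGroup.mk_surjective (braidRels n)).subsingleton

/-- `RSSS(x) ⊆ USS(x) ⊆ SSS(x) ⊆ SS(x)`, with `RSSS(x) = USS(x)`
when `x` is cyclically weighted. -/
theorem invariant_sets_chain (n : ℕ) (x : BraidGroup n) :
    RSSS x ⊆ USS x ∧ USS x ⊆ SSS x ∧ SSS x ⊆ SS x ∧
      (IsCW x → RSSS x = USS x) := by
  have triv : USS x ⊆ SSS x ∧ SSS x ⊆ SS x := ⟨fun y hy => hy.1, fun y hy => hy.1⟩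
  by_cases hn : 2 ≤ n
  · haveI : Fact (2 ≤ n) := ⟨hn⟩
    exact ⟨RSSS_sub_USS x, triv.1, triv.2, fun h =>
      Set.Subset.antisymm (RSSS_sub_USS x) (USS_sub_RSSS h)⟩
  · haveI := subsingleton_of_lt hn
    refine ⟨?_, triv.1, triv.2, fun _ => ?_⟩
    · rintro y ⟨hc, hM, _⟩
      exact ⟨⟨⟨hc, fun z _ => by rw [Subsingleton.elim z y]⟩,
        fun z _ => by rw [Subsingleton.elim z y]⟩, hM⟩
    · ext y
      constructor
      · rintro ⟨hc, hM, _⟩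
        exact ⟨⟨⟨hc, fun z _ => by rw [Subsingleton.elim z y]⟩,
          fun z _ => by rw [Subsingleton.elim z y]⟩, hM⟩
      · rintro ⟨⟨⟨hc, _⟩, _⟩, hM⟩
        exact ⟨hc, hM, 1, one_pos, Subsingleton.elim _ _⟩

end BraidGroup
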